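/- arXiv:1010.1332 — 7 statements merged into one kernel-verified Lean document; each statement's English description precedes it below -/
import Mathlib

section
/- Let p be a prime and n, k ≥ 1 integers, and let R = Mat_n(Z_{p^k}) be the ring of n × n matrices over the integers modulo p^k. Then the normal subgroup J(R) = 1 + Jac(R) has a complement in the unit group G(R) if and only if one of the following holds: k = 1; or k > 1 and p = 2 with n ≤ 3; or k > 1 and p = 3 with n ≤ 2; or k > 1 and n = 1. -/
/-!
The Jacobson radical of `Mat_n(ℤ/p^k)` consists of the matrices divisible by `p`, so `1 + Jac` is
the kernel of the reduction `GL_n(ℤ/p^k) → GL_n(𝔽_p)`, which is surjective. A complement is thus a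
section of this reduction.

Existence. For `k = 1` the kernel is trivial, and for `n = 1` the Teichmüller representatives form
a complement. The remaining cases `(n, p) = (2, 2), (3, 2), (2, 3)` come from characteristic zero:
`GL_n(𝔽_p)` is the reduction of a finite group of matrices over an imaginary quadratic ring `ℤ[ω]`
at a prime of degree one over the split prime `p`, and `ℤ[ω]` maps to `ℤ/p^k` for every `k` because
the root of the quadratic polynomial modulo `p` lifts (`exists_root`). These groups are `S₃`,
Klein's group of order 168 over `ℤ[(1 + √-7)/2]`, and the complex reflection group `G₁₂ ≅ GL₂(3)`
over `ℤ[√-2]`. They are given by explicit lists, and `complement_of_lists` reduces the claim to a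
finite check.

Non-existence (`necessity`). It suffices to reduce modulo `p^2`. A complement contains a unique lift
`1 + E_ij + pA` of each transvection, of order dividing `p`, and lifts of commuting transvections
commute. The relation `(1 + E_ij + pA)^p = 1` says at position `(i, j)` that `1 + (p choose 3) A_ji`
vanishes modulo `p` when `p` is odd (`odd_order_lift`). This is absurd for `p ≥ 5`. For `p = 3` and
`n ≥ 3` it contradicts the commutation of the lifts of `1 + E_01` and `1 + E_02`. For `p = 2` the
order relation is `1 + A_ii + A_jj ≡ 0` (`two_order_lift`), and when `n ≥ 4` the commutation
relations among the lifts of `1 + E_ij` with `i ∈ {0, 1}` and `j ∈ {2, 3}` contradict it.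
-/

open Pointwise

/-- The subgroup `1 + I` of the unit group `Rˣ`, for an ideal `I` of `R`. -/
def onePlus (R : Type*) [Ring R] (I : Ideal R) : Subgroup Rˣ where
  carrier := {u : Rˣ | (u : R) - 1 ∈ I}
  one_mem' := by simp
  mul_mem' := by
    intro a b ha hb
    have h : ((a * b : Rˣ) : R) - 1 = (a : R) * ((b : R) - 1) + ((a : R) - 1) := by
      push_cast; rw [mul_sub, mul_one]; abel
    simpa only [Set.mem_setOf_eq, h] using I.add_mem (I.mul_mem_left _ hb) ha
  inv_mem' := by
    intro a ha
    have h : ((a⁻¹ : Rˣ) : R) - 1 = -((a⁻¹ : Rˣ) * ((a : R) - 1)) := by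
      rw [mul_sub, mul_one, Units.inv_mul, neg_sub]
    simpa only [Set.mem_setOf_eq, h] using I.neg_mem (I.mul_mem_left _ ha)

/-- `H` is a complement of `K`: trivial intersection and `H * K` is everything. -/
def IsComplementOf {G : Type*} [Group G] (H K : Subgroup G) : Prop :=
  H ⊓ K = ⊥ ∧ (H : Set G) * (K : Set G) = Set.univ

namespace JacobsonComplement

open Matrix

variable {n : ℕ}

/-! ### The radical as a congruence kernel -/

/-- Reduction `ℤ/p^k → ℤ/p`. -/
def redHom (p k : ℕ) (hk : 1 ≤ k) : ZMod (p ^ k) →+* ZMod p :=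
  ZMod.castHom (dvd_pow_self p (by omega)) (ZMod p)

theorem redHom_surjective (p k : ℕ) (hk : 1 ≤ k) : Function.Surjective (redHom p k hk) :=
  ZMod.castHom_surjective _

theorem dvd_of_redHom_eq_zero {p k : ℕ} (hp : p.Prime) (hk : 1 ≤ k) {x : ZMod (p ^ k)}
    (hx : redHom p k hk x = 0) : (p : ZMod (p ^ k)) ∣ x := by
  have : NeZero (p ^ k) := ⟨pow_ne_zero _ hp.ne_zero⟩
  have h1 : ((x.val : ℕ) : ZMod p) = 0 := by
    have h2 : redHom p k hk ((x.val : ℕ) : ZMod (p ^ k)) = 0 := by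
      rw [ZMod.natCast_zmod_val]; exact hx
    rwa [map_natCast] at h2
  rw [ZMod.natCast_eq_zero_iff] at h1
  obtain ⟨c, hc⟩ := h1
  refine ⟨c, ?_⟩
  rw [← ZMod.natCast_zmod_val x, hc]
  push_cast
  rfl

theorem p_pow_eq_zero (p k : ℕ) : (p : ZMod (p ^ k)) ^ k = 0 := by
  have := ZMod.natCast_self (p ^ k)
  push_cast at this
  exact this

theorem mem_jacobson_bot_iff {p k : ℕ} (hp : p.Prime) (hk : 1 ≤ k) (x : ZMod (p ^ k)) :
    x ∈ Ideal.jacobson (⊥ : Ideal (ZMod (p ^ k))) ↔ redHom p k hk x = 0 := by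
  have : Fact p.Prime := ⟨hp⟩
  rw [Ideal.mem_jacobson_bot]
  constructor
  · intro h
    by_contra hx
    obtain ⟨y, hy⟩ := redHom_surjective p k hk (-(redHom p k hk x)⁻¹)
    have h1 := (h y).map (redHom p k hk)
    rw [map_add, map_mul, hy, map_one, mul_neg, mul_inv_cancel₀ hx] at h1
    simp at h1
  · intro h y
    obtain ⟨c, rfl⟩ := dvd_of_redHom_eq_zero hp hk h
    refine IsNilpotent.isUnit_add_one ⟨k, ?_⟩
    rw [mul_pow, mul_pow, p_pow_eq_zero, zero_mul, zero_mul]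

theorem mem_jacobson_matrix_iff {R : Type*} [CommRing R] (A : Matrix (Fin n) (Fin n) R) :
    A ∈ Ideal.jacobson (⊥ : Ideal (Matrix (Fin n) (Fin n) R)) ↔
      ∀ i j, A i j ∈ Ideal.jacobson (⊥ : Ideal R) := by
  have h := TwoSidedIdeal.matrix_jacobson_bot (R := R) (n := Fin n)
  have h1 : ∀ (S : Type _) [Ring S] (x : S),
      x ∈ (⊥ : TwoSidedIdeal S).jacobson ↔ x ∈ Ideal.jacobson (⊥ : Ideal S) := by
    intro S _ x
    rw [← TwoSidedIdeal.mem_asIdeal, TwoSidedIdeal.asIdeal_jacobson, TwoSidedIdeal.bot_asIdeal]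
  rw [← h1, ← h, TwoSidedIdeal.mem_matrix]
  simp only [h1]

/-- `1 + Jac` is the congruence subgroup of matrices that reduce to `1` modulo `p`. -/
theorem mem_onePlus_iff {p k : ℕ} (hp : p.Prime) (hk : 1 ≤ k)
    (u : (Matrix (Fin n) (Fin n) (ZMod (p ^ k)))ˣ) :
    u ∈ onePlus (Matrix (Fin n) (Fin n) (ZMod (p ^ k))) (Ideal.jacobson ⊥) ↔
      (redHom p k hk).mapMatrix (u : Matrix (Fin n) (Fin n) (ZMod (p ^ k))) = 1 := by
  change (u : Matrix (Fin n) (Fin n) (ZMod (p ^ k))) - 1 ∈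
    Ideal.jacobson (⊥ : Ideal (Matrix (Fin n) (Fin n) (ZMod (p ^ k)))) ↔ _
  rw [mem_jacobson_matrix_iff, ← sub_eq_zero, ← map_one (redHom p k hk).mapMatrix, ← map_sub,
    ← Matrix.ext_iff]
  simp only [mem_jacobson_bot_iff hp hk]
  rfl

/-! ### Constructing complements: the cases `k = 1` and `n = 1` -/

/-- A multiplicative set of matrices over `ℤ/p^k` that reduces bijectively onto `GL_n(𝔽_p)` is
a complement. Invertibility of its members and closure under inverses come for free, since
reduction reflects units and the unit group is finite. -/
theorem exists_complement {p k : ℕ} (hp : p.Prime) (hk : 1 ≤ k)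
    (M : Submonoid (Matrix (Fin n) (Fin n) (ZMod (p ^ k))))
    (inj : ∀ x ∈ M, (redHom p k hk).mapMatrix x = 1 → x = 1)
    (surj : ∀ A : Matrix (Fin n) (Fin n) (ZMod p), A.det ≠ 0 →
      ∃ x ∈ M, (redHom p k hk).mapMatrix x = A) :
    ∃ H : Subgroup (Matrix (Fin n) (Fin n) (ZMod (p ^ k)))ˣ,
      IsComplementOf H
        (onePlus (Matrix (Fin n) (Fin n) (ZMod (p ^ k))) (Ideal.jacobson ⊥)) := by
  have : Fact p.Prime := ⟨hp⟩
  have : NeZero (p ^ k) := ⟨pow_ne_zero _ hp.ne_zero⟩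
  have : Finite (Matrix (Fin n) (Fin n) (ZMod (p ^ k)))ˣ := inferInstance
  let H : Subgroup (Matrix (Fin n) (Fin n) (ZMod (p ^ k)))ˣ :=
    { carrier := {u | (u : Matrix (Fin n) (Fin n) (ZMod (p ^ k))) ∈ M}
      one_mem' := by simp [M.one_mem]
      mul_mem' := fun {a b} ha hb => by
        simpa using M.mul_mem ha hb
      inv_mem' := fun {a} ha => by
        obtain ⟨m, hm⟩ := (Submonoid.mem_powers_iff _ _).mp
          ((mem_powers_iff_mem_zpowers (x := a) (y := a⁻¹)).mpr (inv_mem (Subgroup.mem_zpowers a)))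
        change ((a⁻¹ : (Matrix (Fin n) (Fin n) (ZMod (p ^ k)))ˣ) : Matrix _ _ _) ∈ M
        rw [← hm, Units.val_pow_eq_pow_val]
        exact M.pow_mem ha m }
  refine ⟨H, ?_, ?_⟩
  · rw [eq_bot_iff]
    rintro u ⟨hu1 : (u : Matrix (Fin n) (Fin n) (ZMod (p ^ k))) ∈ M, hu2⟩
    have h2 := (mem_onePlus_iff hp hk u).mp hu2
    exact Subgroup.mem_bot.mpr (Units.ext (inj _ hu1 h2))
  · rw [Set.eq_univ_iff_forall]
    intro g
    have hg : ((redHom p k hk).mapMatrix (g : Matrix (Fin n) (Fin n) (ZMod (p ^ k)))).det ≠ 0 := by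
      have := (g.isUnit.map (redHom p k hk).mapMatrix)
      exact ((Matrix.isUnit_iff_isUnit_det _).mp this).ne_zero
    obtain ⟨x, hx, hxg⟩ := surj _ hg
    have hxu : IsUnit x := by
      rw [Matrix.isUnit_iff_isUnit_det]
      have h1 : redHom p k hk x.det ≠ 0 := by
        rw [RingHom.map_det, hxg]; exact hg
      obtain ⟨y, hy⟩ := redHom_surjective p k hk ((redHom p k hk x.det)⁻¹)
      have h2 : redHom p k hk (x.det * y - 1) = 0 := by
        rw [map_sub, map_mul, hy, mul_inv_cancel₀ h1, map_one, sub_self]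
      obtain ⟨c, hc⟩ := dvd_of_redHom_eq_zero hp hk h2
      have h3 : IsUnit (x.det * y) := by
        have : x.det * y = p * c + 1 := by rw [← hc]; ring
        rw [this]
        refine IsNilpotent.isUnit_add_one ⟨k, ?_⟩
        rw [mul_pow, p_pow_eq_zero, zero_mul]
      exact isUnit_of_mul_isUnit_left h3
    obtain ⟨u, rfl⟩ := hxu
    refine Set.mem_mul.mpr ⟨u, hx, u⁻¹ * g, ?_, by group⟩
    rw [SetLike.mem_coe, mem_onePlus_iff hp hk, Units.val_mul, map_mul, ← hxg, ← map_mul]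
    simp

/-- For `k = 1` the radical vanishes. -/
theorem complement_of_k_eq_one {p : ℕ} (hp : p.Prime) (hk : 1 ≤ 1) :
    ∃ H : Subgroup (Matrix (Fin n) (Fin n) (ZMod (p ^ 1)))ˣ,
      IsComplementOf H
        (onePlus (Matrix (Fin n) (Fin n) (ZMod (p ^ 1))) (Ideal.jacobson ⊥)) := by
  refine exists_complement hp hk ⊤ ?_ ?_
  · intro x _ hx
    rw [← sub_eq_zero, ← map_one (redHom p 1 hk).mapMatrix, ← map_sub] at hx
    rw [← sub_eq_zero]
    ext i j
    obtain ⟨c, hc⟩ := dvd_of_redHom_eq_zero hp hk (congrFun (congrFun hx i) j)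
    have h0 : (p : ZMod (p ^ 1)) = 0 := (pow_one _).symm.trans (p_pow_eq_zero p 1)
    exact hc.trans (by rw [h0, zero_mul]; rfl)
  · intro A _
    choose f hf using redHom_surjective p 1 hk
    exact ⟨A.map f, trivial, by ext i j; simp [hf]⟩

/-- The group of principal units of `ℤ/p^k` has exponent dividing `p^k`. -/
theorem pow_eq_one_of_redHom {p k : ℕ} (hp : p.Prime) (hk : 1 ≤ k) {z : ZMod (p ^ k)}
    (hz : redHom p k hk z = 1) : z ^ p ^ k = 1 := by
  have h1 : redHom p k hk (z - 1) = 0 := by rw [map_sub, hz, map_one, sub_self]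
  have h2 := dvd_sub_pow_of_dvd_sub (dvd_of_redHom_eq_zero hp hk h1) k
  rw [pow_succ, p_pow_eq_zero, zero_mul, zero_dvd_iff, one_pow, sub_eq_zero] at h2
  exact h2

/-- For `n = 1` the `(p-1)`-st roots of unity (Teichmüller representatives) form a complement. -/
theorem complement_of_n_eq_one {p k : ℕ} (hp : p.Prime) (hk : 1 ≤ k) :
    ∃ H : Subgroup (Matrix (Fin 1) (Fin 1) (ZMod (p ^ k)))ˣ,
      IsComplementOf H
        (onePlus (Matrix (Fin 1) (Fin 1) (ZMod (p ^ k))) (Ideal.jacobson ⊥)) := by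
  have : Fact p.Prime := ⟨hp⟩
  let S : Submonoid (ZMod (p ^ k)) :=
    { carrier := {x | x ^ (p - 1) = 1}
      one_mem' := by simp
      mul_mem' := fun {a b} (ha : _ = _) (hb : _ = _) => by
        simp only [Set.mem_ofPred_eq, mul_pow, ha, hb, mul_one] }
  refine exists_complement hp hk (S.map (Matrix.scalar (Fin 1)).toMonoidHom) ?_ ?_
  · rintro _ ⟨x, hx, rfl⟩ h
    have h1 : redHom p k hk x = 1 := by simpa using congrFun (congrFun h 0) 0
    have hcop : (p - 1).Coprime (p ^ k) :=
      Nat.Coprime.pow_right _ ((Nat.coprime_self_sub_left hp.one_le).mpr (Nat.coprime_one_left p))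
    have h2 : x = 1 := by
      have h3 := pow_gcd_eq_one.mpr ⟨hx, pow_eq_one_of_redHom hp hk h1⟩
      rwa [hcop.gcd_eq_one, pow_one] at h3
    subst h2
    simp
  · intro A hA
    rw [Matrix.det_fin_one] at hA
    obtain ⟨y, hy⟩ := redHom_surjective p k hk (A 0 0)
    refine ⟨Matrix.scalar (Fin 1) (y ^ p ^ k), ⟨y ^ p ^ k, ?_, rfl⟩, ?_⟩
    · change (y ^ p ^ k) ^ (p - 1) = 1
      rw [← pow_mul, mul_comm, pow_mul]
      apply pow_eq_one_of_redHom hp hk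
      rw [map_pow, hy, ZMod.pow_card_sub_one_eq_one hA]
    · ext i j
      rw [Subsingleton.elim i 0, Subsingleton.elim j 0]
      simp [hy]

/-! ### Lifts of transvections modulo `p^2` and non-existence -/

theorem single_mul_entry {R : Type*} [CommRing R] (i j r s : Fin n)
    (A : Matrix (Fin n) (Fin n) R) :
    (single i j (1 : R) * A) r s = if r = i then A j s else 0 := by
  split_ifs with h
  · subst h; simp
  · simp [h]

theorem mul_single_entry {R : Type*} [CommRing R] (i j r s : Fin n)
    (A : Matrix (Fin n) (Fin n) R) :
    (A * single i j (1 : R)) r s = if s = j then A r i else 0 := by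
  split_ifs with h
  · subst h; simp
  · simp [h]

/-- The first-order condition for lifts of two commuting transvections to commute. -/
theorem commute_lift {R : Type*} [CommRing R] {c : R} (hc : c * c = 0)
    {A B : Matrix (Fin n) (Fin n) R} {a b d e : Fin n} (hbd : b ≠ d) (hea : e ≠ a)
    (h : (1 + (single a b 1 + c • A)) * (1 + (single d e 1 + c • B)) =
      (1 + (single d e 1 + c • B)) * (1 + (single a b 1 + c • A))) (r s : Fin n) :
    c * ((if r = a then B b s else 0) + (if s = e then A r d else 0)
      - (if r = d then A e s else 0) - (if s = b then B r a else 0)) = 0 := by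
  have h1 : (single a b (1 : R)) * single d e 1 = 0 := by simp [hbd]
  have h2 : (single d e (1 : R)) * single a b 1 = 0 := by simp [hea]
  have h3 : c • (single a b 1 * B + A * single d e 1 - single d e 1 * A - B * single a b 1) = 0 := by
    rw [← sub_eq_zero] at h
    rw [← h]
    simp only [mul_add, add_mul, mul_one, one_mul, h1, h2, Matrix.smul_mul, Matrix.mul_smul,
      smul_smul, hc, zero_smul, smul_sub, smul_add]
    abel
  have h4 := congrFun (congrFun h3 r) s
  simpa only [Matrix.smul_apply, Matrix.sub_apply, Matrix.add_apply, single_mul_entry,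
    mul_single_entry, smul_eq_mul,
    Matrix.zero_apply] using h4

/-- The binomial expansion in a possibly noncommutative ring, truncated at `N ^ 4 = 0`. -/
theorem one_add_pow_of_pow_four {S : Type*} [Ring S] {N : S} (hN : N ^ 4 = 0) (m : ℕ) :
    (1 + N) ^ m = 1 + m • N + m.choose 2 • N ^ 2 + m.choose 3 • N ^ 3 := by
  induction m with
  | zero => simp
  | succ m ih =>
    rw [pow_succ, ih, Nat.choose_succ_succ' m 1, Nat.choose_succ_succ' m 2, Nat.choose_one_right]
    have h2 : N ^ 2 * N = N ^ 3 := (pow_succ N 2).symm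
    have h3 : N ^ 3 * N = 0 := by rw [← pow_succ]; exact hN
    simp only [mul_add, add_mul, mul_one, one_mul, smul_mul_assoc, ← pow_two, h2, h3, smul_zero,
      add_smul, one_smul]
    abel

theorem lift_sq {R : Type*} [CommRing R] {c : R} (hc : c * c = 0)
    (A : Matrix (Fin n) (Fin n) R) {i j : Fin n} (hij : i ≠ j) :
    (single i j 1 + c • A) ^ 2 = c • (single i j 1 * A + A * single i j 1) := by
  have h1 : (single i j (1 : R)) * single i j 1 = 0 := by simp [hij.symm]
  simp only [pow_two, mul_add, add_mul, h1, Matrix.smul_mul, Matrix.mul_smul, smul_smul, hc,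
    zero_smul, smul_add]
  abel

theorem lift_cube {R : Type*} [CommRing R] {c : R} (hc : c * c = 0)
    (A : Matrix (Fin n) (Fin n) R) {i j : Fin n} (hij : i ≠ j) :
    (single i j 1 + c • A) ^ 3 = c • (single i j 1 * A * single i j 1) := by
  have h1 : (single i j (1 : R)) * single i j 1 = 0 := by simp [hij.symm]
  have h2 : single i j (1 : R) * (single i j 1 * A) = 0 := by
    rw [← mul_assoc, h1, zero_mul]
  rw [pow_succ', lift_sq hc A hij]
  simp only [mul_add, add_mul, h2, Matrix.smul_mul, Matrix.mul_smul, smul_smul, hc,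
    zero_smul, smul_add, mul_assoc, smul_zero, zero_add, add_zero]

/-- With the two previous lemmas, this makes the binomial expansion of a lift `1 + (E_ij + cA)`
explicit. -/
theorem lift_pow_four {R : Type*} [CommRing R] {c : R} (hc : c * c = 0)
    (A : Matrix (Fin n) (Fin n) R) {i j : Fin n} (hij : i ≠ j) :
    (single i j 1 + c • A) ^ 4 = 0 := by
  have h1 : (single i j (1 : R)) * single i j 1 = 0 := by simp [hij.symm]
  have h2 : single i j (1 : R) * (single i j 1 * A * single i j 1) = 0 := by
    rw [← mul_assoc, ← mul_assoc, h1, zero_mul, zero_mul]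
  rw [pow_succ', lift_cube hc A hij]
  simp only [add_mul, h2, Matrix.smul_mul, Matrix.mul_smul, smul_smul, hc,
    zero_smul, smul_zero, add_zero]

theorem p_mul_p (p : ℕ) : (p : ZMod (p ^ 2)) * p = 0 := by
  rw [← pow_two]; exact p_pow_eq_zero p 2

theorem p_ne_zero {p : ℕ} (hp : p.Prime) : (p : ZMod (p ^ 2)) ≠ 0 := by
  rw [Ne, ZMod.natCast_eq_zero_iff]
  intro h
  have h1 := Nat.le_of_dvd hp.pos h
  have h2 := hp.two_le
  nlinarith

/-- The condition for a lift of a transvection to have order `p`, for odd `p`. -/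
theorem odd_order_lift {p : ℕ} (hp : p.Prime) (hp2 : 3 ≤ p)
    {A : Matrix (Fin n) (Fin n) (ZMod (p ^ 2))} {i j : Fin n} (hij : i ≠ j)
    (h : (1 + (single i j 1 + (p : ZMod (p ^ 2)) • A)) ^ p = 1) :
    (p : ZMod (p ^ 2)) * (1 + (p.choose 3 : ZMod (p ^ 2)) * A j i) = 0 := by
  have hc := p_mul_p p
  rw [one_add_pow_of_pow_four (lift_pow_four hc A hij), lift_sq hc A hij,
    lift_cube hc A hij] at h
  simp only [← Nat.cast_smul_eq_nsmul (ZMod (p ^ 2))] at h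
  obtain ⟨q, hq⟩ := hp.dvd_choose_self (k := 2) (by omega) (by omega)
  have h1 := congrFun (congrFun h i) j
  simp only [Matrix.add_apply, Matrix.smul_apply, single_mul_entry, mul_single_entry, if_true,
    Matrix.one_apply_ne hij, Matrix.single_apply_same, smul_eq_mul, hq] at h1
  push_cast at h1
  linear_combination h1 - (A i j + q * (A j j + A i i)) * hc

/-- The condition for a lift of a transvection to be an involution, for `p = 2`. -/
theorem two_order_lift {A : Matrix (Fin n) (Fin n) (ZMod (2 ^ 2))} {i j : Fin n} (hij : i ≠ j)
    (h : (1 + (single i j 1 + ((2 : ℕ) : ZMod (2 ^ 2)) • A)) ^ 2 = 1) :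
    ((2 : ℕ) : ZMod (2 ^ 2)) * (1 + A j j + A i i) = 0 := by
  have hc := p_mul_p 2
  rw [one_add_pow_of_pow_four (lift_pow_four hc A hij), lift_sq hc A hij,
    lift_cube hc A hij, Nat.choose_self, Nat.choose_succ_self] at h
  simp only [← Nat.cast_smul_eq_nsmul (ZMod (2 ^ 2))] at h
  have h1 := congrFun (congrFun h i) j
  simp only [Matrix.add_apply, Matrix.smul_apply, single_mul_entry, mul_single_entry, if_true,
    Matrix.one_apply_ne hij, Matrix.single_apply_same, smul_eq_mul] at h1
  push_cast at h1 hc ⊢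
  linear_combination h1 - A i j * hc

/-- A complement provides a multiplicative set of matrices over `ℤ/p^2`, on which reduction is
injective, and which contains a lift of every elementary transvection. -/
theorem exists_lifts {p k : ℕ} (hp : p.Prime) (hk : 1 ≤ k) (hk2 : 2 ≤ k)
    (h : ∃ H : Subgroup (Matrix (Fin n) (Fin n) (ZMod (p ^ k)))ˣ,
      IsComplementOf H
        (onePlus (Matrix (Fin n) (Fin n) (ZMod (p ^ k))) (Ideal.jacobson ⊥))) :
    ∃ M : Submonoid (Matrix (Fin n) (Fin n) (ZMod (p ^ 2))),
      (∀ x ∈ M, ∀ y ∈ M, (redHom p 2 one_le_two).mapMatrix x =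
        (redHom p 2 one_le_two).mapMatrix y → x = y) ∧
      ∀ i j : Fin n, i ≠ j → ∃ A, 1 + (single i j 1 + (p : ZMod (p ^ 2)) • A) ∈ M := by
  obtain ⟨H, hinf, hmul⟩ := h
  let ρ : ZMod (p ^ k) →+* ZMod (p ^ 2) := ZMod.castHom (pow_dvd_pow p hk2) _
  have hρ : (redHom p 2 one_le_two).comp ρ = redHom p k hk := Subsingleton.elim _ _
  have hρ' : ∀ X : Matrix (Fin n) (Fin n) (ZMod (p ^ k)),
      (redHom p 2 one_le_two).mapMatrix (ρ.mapMatrix X) = (redHom p k hk).mapMatrix X := by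
    intro X
    rw [← hρ]
    rfl
  -- The image of `H` under the reduction `ρ` modulo `p^2`.
  refine ⟨(H.toSubmonoid.map (Units.coeHom _)).map ρ.mapMatrix.toMonoidHom, ?_, ?_⟩
  · rintro _ ⟨_, ⟨u, hu, rfl⟩, rfl⟩ _ ⟨_, ⟨v, hv, rfl⟩, rfl⟩ huv
    have h1 : (redHom p k hk).mapMatrix (u : Matrix (Fin n) (Fin n) (ZMod (p ^ k))) =
        (redHom p k hk).mapMatrix (v : Matrix (Fin n) (Fin n) (ZMod (p ^ k))) := by
      rw [← hρ', ← hρ']; exact huv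
    have h2 : v⁻¹ * u ∈ H ⊓ onePlus (Matrix (Fin n) (Fin n) (ZMod (p ^ k)))
        (Ideal.jacobson ⊥) := by
      refine ⟨H.mul_mem (H.inv_mem hv) hu, ?_⟩
      refine (mem_onePlus_iff hp hk _).mpr ?_
      rw [Units.val_mul, map_mul, h1, ← map_mul]
      simp
    rw [hinf, Subgroup.mem_bot, inv_mul_eq_one] at h2
    rw [h2]
  · intro i j hij
    have hdet : IsUnit (transvection i j (1 : ZMod (p ^ k))) := by
      rw [Matrix.isUnit_iff_isUnit_det, Matrix.det_transvection_of_ne _ _ hij]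
      exact isUnit_one
    obtain ⟨t, ht⟩ := hdet
    obtain ⟨u, hu, w, hw, huw⟩ := Set.mem_mul.mp (hmul.symm ▸ Set.mem_univ t)
    have hw1 := (mem_onePlus_iff hp hk w).mp hw
    have h1 : (redHom p k hk).mapMatrix (u : Matrix (Fin n) (Fin n) (ZMod (p ^ k))) =
        (redHom p k hk).mapMatrix (transvection i j 1) := by
      rw [← ht, ← huw, Units.val_mul, map_mul, hw1, mul_one]
    have h2 : ∀ r s, ∃ a, ρ.mapMatrix (u : Matrix (Fin n) (Fin n) (ZMod (p ^ k))) r s -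
        ρ.mapMatrix (transvection i j 1) r s = (p : ZMod (p ^ 2)) * a := by
      intro r s
      apply dvd_of_redHom_eq_zero hp one_le_two
      rw [map_sub, sub_eq_zero]
      have h3 := congrFun (congrFun h1 r) s
      rw [← hρ', ← hρ'] at h3
      exact h3
    choose A hA using h2
    have h4 : 1 + (single i j 1 + (p : ZMod (p ^ 2)) • (Matrix.of A)) =
        ρ.mapMatrix (u : Matrix (Fin n) (Fin n) (ZMod (p ^ k))) := by
      have h5 : ρ.mapMatrix (transvection i j 1) = 1 + single i j 1 := by
        rw [transvection, map_add, map_one]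
        simp
      rw [h5] at hA
      ext r s
      have h6 := hA r s
      simp only [Matrix.add_apply, Matrix.smul_apply, Matrix.of_apply, smul_eq_mul] at h6 ⊢
      linear_combination -h6
    exact ⟨Matrix.of A, h4 ▸ ⟨_, ⟨u, hu, rfl⟩, rfl⟩⟩

theorem red_lift (p : ℕ) (i j : Fin n) (A : Matrix (Fin n) (Fin n) (ZMod (p ^ 2))) :
    (redHom p 2 one_le_two).mapMatrix (1 + (single i j 1 + (p : ZMod (p ^ 2)) • A)) =
      transvection i j 1 := by
  have h : (redHom p 2 one_le_two).mapMatrix ((p : ZMod (p ^ 2)) • A) = 0 := by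
    ext r s
    simp
  rw [map_add, map_add, h, map_one, add_zero, transvection]
  simp

/-- If a complement exists with `k ≥ 2` and `n ≥ 2`, then `p` and `n` are small. The commutation
relations are read off modulo `p` at a single entry `(r, s)` each. -/
theorem necessity {p k : ℕ} (hp : p.Prime) (hk : 1 ≤ k) (hk2 : 2 ≤ k) (hn : 2 ≤ n)
    (h : ∃ H : Subgroup (Matrix (Fin n) (Fin n) (ZMod (p ^ k)))ˣ,
      IsComplementOf H
        (onePlus (Matrix (Fin n) (Fin n) (ZMod (p ^ k))) (Ideal.jacobson ⊥))) :
    (p = 2 ∧ n ≤ 3) ∨ (p = 3 ∧ n ≤ 2) := by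
  obtain ⟨M, hinj, hlift⟩ := exists_lifts hp hk hk2 h
  have hpow : ∀ i j : Fin n, i ≠ j → ∀ A, 1 + (single i j 1 + (p : ZMod (p ^ 2)) • A) ∈ M →
      (1 + (single i j 1 + (p : ZMod (p ^ 2)) • A)) ^ p = 1 := by
    intro i j hij A hA
    refine hinj _ (M.pow_mem hA p) _ M.one_mem ?_
    have h1 : ∀ m : ℕ, transvection i j (1 : ZMod p) ^ m = transvection i j (m : ZMod p) := by
      intro m
      induction m with
      | zero => simp
      | succ m ih => rw [pow_succ, ih, transvection_mul_transvection_same _ _ hij]; push_cast; rfl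
    rw [map_pow, red_lift, h1, map_one, ZMod.natCast_self, transvection_zero]
  have hcomm : ∀ a b d e : Fin n, b ≠ d → e ≠ a → ∀ A B,
      1 + (single a b 1 + (p : ZMod (p ^ 2)) • A) ∈ M →
      1 + (single d e 1 + (p : ZMod (p ^ 2)) • B) ∈ M → ∀ r s : Fin n,
      (p : ZMod (p ^ 2)) * ((if r = a then B b s else 0) + (if s = e then A r d else 0)
        - (if r = d then A e s else 0) - (if s = b then B r a else 0)) = 0 := by
    intro a b d e hbd hea A B hA hB
    refine commute_lift (p_mul_p p) hbd hea (hinj _ (M.mul_mem hA hB) _ (M.mul_mem hB hA) ?_)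
    rw [map_mul, map_mul, red_lift, red_lift]
    simp only [transvection, mul_add, add_mul, mul_one, one_mul,
      Matrix.single_mul_single_of_ne _ _ _ _ hbd, Matrix.single_mul_single_of_ne _ _ _ _ hea]
    abel
  have hp0 := p_ne_zero hp
  have hpp := p_mul_p p
  rcases Nat.lt_or_ge p 3 with hlt | hge
  · have hp2 : p = 2 := le_antisymm (by omega) hp.two_le
    subst hp2
    refine Or.inl ⟨rfl, ?_⟩
    by_contra hn4
    obtain ⟨m, rfl⟩ : ∃ m, n = m + 4 := ⟨n - 4, by omega⟩
    let i0 : Fin (m + 4) := ⟨0, by omega⟩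
    let i1 : Fin (m + 4) := ⟨1, by omega⟩
    let i2 : Fin (m + 4) := ⟨2, by omega⟩
    let i3 : Fin (m + 4) := ⟨3, by omega⟩
    have d01 : i0 ≠ i1 := by simp [i0, i1]
    have d02 : i0 ≠ i2 := by simp [i0, i2]
    have d03 : i0 ≠ i3 := by simp [i0, i3]
    have d12 : i1 ≠ i2 := by simp [i1, i2]
    have d13 : i1 ≠ i3 := by simp [i1, i3]
    have d23 : i2 ≠ i3 := by simp [i2, i3]
    obtain ⟨P, hP⟩ := hlift i0 i2 d02
    obtain ⟨Q, hQ⟩ := hlift i0 i3 d03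
    obtain ⟨R, hR⟩ := hlift i1 i2 d12
    obtain ⟨S, hS⟩ := hlift i1 i3 d13
    -- Modulo 2, the sum of `e1`, ..., `e4` is `S i1 i1 + S i3 i3`, which by `e5` equals `1`.
    have e1 := hcomm i0 i2 i1 i3 d12.symm d03.symm P S hP hS i0 i2
    have e2 := hcomm i0 i3 i1 i3 d13.symm d03.symm Q S hQ hS i0 i3
    have e3 := hcomm i1 i2 i1 i3 d12.symm d13.symm R S hR hS i1 i2
    have e4 := hcomm i0 i3 i1 i2 d13.symm d02.symm Q R hQ hR i0 i2
    have e5 := two_order_lift d13 (hpow i1 i3 d13 S hS)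
    simp only [if_true, if_neg d01, if_neg d23]
      at e1 e2 e3 e4
    apply hp0
    push_cast at hpp e1 e2 e3 e4 e5 ⊢
    linear_combination e1 - e2 - e3 - e4 + e5 + (Q i0 i1 - S i1 i1) * hpp
  · rcases Nat.lt_or_ge p 4 with hlt | hge4
    · have hp3 : p = 3 := by omega
      subst hp3
      refine Or.inr ⟨rfl, ?_⟩
      by_contra hn3
      obtain ⟨m, rfl⟩ : ∃ m, n = m + 3 := ⟨n - 3, by omega⟩
      let i0 : Fin (m + 3) := ⟨0, by omega⟩
      let i1 : Fin (m + 3) := ⟨1, by omega⟩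
      let i2 : Fin (m + 3) := ⟨2, by omega⟩
      have d01 : i0 ≠ i1 := by simp [i0, i1]
      have d02 : i0 ≠ i2 := by simp [i0, i2]
      have d12 : i1 ≠ i2 := by simp [i1, i2]
      obtain ⟨A, hA⟩ := hlift i0 i1 d01
      obtain ⟨B, hB⟩ := hlift i0 i2 d02
      -- `B i2 i0` equals `-1` modulo 3 by `e1`, and `0` by `e2`.
      have e1 := odd_order_lift hp hge d02 (hpow i0 i2 d02 B hB)
      have e2 := hcomm i0 i1 i0 i2 d01.symm d02.symm A B hA hB i2 i1
      simp only [if_true, if_neg d12, if_neg d02.symm, Nat.choose_self] at e1 e2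
      apply hp0
      push_cast at e1 e2 ⊢
      linear_combination e1 + e2
    · exfalso
      let i0 : Fin n := ⟨0, by omega⟩
      let i1 : Fin n := ⟨1, by omega⟩
      have d01 : i0 ≠ i1 := by simp [i0, i1]
      obtain ⟨A, hA⟩ := hlift i0 i1 d01
      have e1 := odd_order_lift hp hge d01 (hpow i0 i1 d01 A hA)
      -- For `p ≥ 5`, `p` divides `p.choose 3`, so `e1` reads `p = 0`.
      obtain ⟨q, hq⟩ := hp.dvd_choose_self (k := 3) (by omega) (by omega)
      apply hp0
      rw [hq] at e1
      push_cast at e1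
      linear_combination e1 - q * A i1 i0 * hpp

/-! ### Complements from finite groups over imaginary quadratic rings -/

/-- A simple root `r` of `X² - bX - a` modulo `p` lifts to `ℤ/p^k`. The derivative at `r` being
`-1` modulo `p`, the Newton step is just `w ↦ w + (w² - bw - a)`. -/
theorem exists_root {p : ℕ} {a b r : ℤ} (h0 : (p : ℤ) ∣ r ^ 2 - b * r - a)
    (h1 : (p : ℤ) ∣ 2 * r - b + 1) (k : ℕ) (hk : 1 ≤ k) :
    ∃ w : ℤ, (p : ℤ) ^ k ∣ w ^ 2 - b * w - a ∧ (p : ℤ) ∣ w - r := by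
  induction k, hk using Nat.le_induction with
  | base => exact ⟨r, by simpa using h0, by simp⟩
  | succ k hk ih =>
    obtain ⟨w, hw, hwr⟩ := ih
    have hpw : (p : ℤ) ∣ w ^ 2 - b * w - a := (dvd_pow_self _ (by omega)).trans hw
    refine ⟨w + (w ^ 2 - b * w - a), ?_, ?_⟩
    · have h2 : (w + (w ^ 2 - b * w - a)) ^ 2 - b * (w + (w ^ 2 - b * w - a)) - a =
          (w ^ 2 - b * w - a) *
            ((2 * r - b + 1) + 2 * (w - r) + (w ^ 2 - b * w - a)) := by ring
      rw [h2, pow_succ]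
      exact mul_dvd_mul hw (dvd_add (dvd_add h1 (hwr.mul_left 2)) hpw)
    · have h2 : w + (w ^ 2 - b * w - a) - r = (w - r) + (w ^ 2 - b * w - a) := by ring
      rw [h2]
      exact dvd_add hwr hpw

/-- Entrywise reduction of matrices over `ℤ[ω]`, `ω² = a + bω`, sending `ω` to `r` modulo `p`. -/
def red (p : ℕ) {a b : ℤ} (r : ℤ) (A : Matrix (Fin n) (Fin n) (QuadraticAlgebra ℤ a b)) :
    Matrix (Fin n) (Fin n) (ZMod p) :=
  A.map fun x => ((x.re + r * x.im : ℤ) : ZMod p)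

/-- The ring `ℤ[ω]` maps to `ℤ/p^k` compatibly with `ω ↦ r` modulo `p`. -/
theorem exists_hom {p k : ℕ} (hk : 1 ≤ k) {a b r : ℤ}
    (h0 : (p : ℤ) ∣ r ^ 2 - b * r - a) (h1 : (p : ℤ) ∣ 2 * r - b + 1) :
    ∃ φ : QuadraticAlgebra ℤ a b →+* ZMod (p ^ k),
      ∀ A : Matrix (Fin n) (Fin n) (QuadraticAlgebra ℤ a b),
        (redHom p k hk).mapMatrix (φ.mapMatrix A) = red p r A := by
  obtain ⟨w, hw, hwr⟩ := exists_root h0 h1 k hk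
  have hw' : (w : ZMod (p ^ k)) * w = a • 1 + b • (w : ZMod (p ^ k)) := by
    have h2 : ((w ^ 2 - b * w - a : ℤ) : ZMod (p ^ k)) = 0 := by
      rw [ZMod.intCast_zmod_eq_zero_iff_dvd]
      exact_mod_cast hw
    push_cast at h2
    rw [zsmul_eq_mul, zsmul_eq_mul]
    linear_combination h2
  have hwr' : (w : ZMod p) = r := by
    rw [← sub_eq_zero, ← Int.cast_sub, ZMod.intCast_zmod_eq_zero_iff_dvd]
    exact hwr
  refine ⟨(QuadraticAlgebra.lift ⟨(w : ZMod (p ^ k)), hw'⟩).toRingHom, ?_⟩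
  intro A
  ext i j
  simp [red, QuadraticAlgebra.lift, hwr', mul_comm]

/-- Criterion for the existence of a complement by a finite check over `ℤ[ω]`, `ω² = a + bω`.
The products `reps * stab` form a finite set stable under left multiplication by `gens`, hence
contain the monoid generated by `gens`; only `1` among them reduces to `1`; and the reductions of
`gens` contain all transvections and all invertible diagonal matrices, which generate
`GL_n(𝔽_p)`. -/
theorem complement_of_lists {p k : ℕ} (hp : p.Prime) (hk : 1 ≤ k) {a b : ℤ} (r : ℤ)
    (h0 : (p : ℤ) ∣ r ^ 2 - b * r - a) (h1 : (p : ℤ) ∣ 2 * r - b + 1)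
    (gens reps stab : List (Matrix (Fin n) (Fin n) (QuadraticAlgebra ℤ a b)))
    (one_reps : 1 ∈ reps) (one_stab : 1 ∈ stab)
    (mul_stab : ∀ x ∈ stab, ∀ y ∈ stab, x * y ∈ stab)
    (gens_mul : ∀ g ∈ gens, ∀ c ∈ reps, ∃ c' ∈ reps, ∃ x ∈ stab, g * c = c' * x)
    (ker : ∀ c ∈ reps, ∀ x ∈ stab, red p r (c * x) = 1 → c * x = 1)
    (trans : ∀ i j : Fin n, i ≠ j → ∀ x : ZMod p,
      transvection i j x ∈ 1 :: gens.map (red p r))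
    (diag : ∀ d : Fin n → ZMod p, (∀ i, d i ≠ 0) →
      Matrix.diagonal d ∈ 1 :: gens.map (red p r)) :
    ∃ H : Subgroup (Matrix (Fin n) (Fin n) (ZMod (p ^ k)))ˣ,
      IsComplementOf H
        (onePlus (Matrix (Fin n) (Fin n) (ZMod (p ^ k))) (Ideal.jacobson ⊥)) := by
  have : Fact p.Prime := ⟨hp⟩
  obtain ⟨φ, hφ⟩ := exists_hom (n := n) hk h0 h1
  have hcl : ∀ t ∈ Submonoid.closure {g | g ∈ gens}, ∃ c ∈ reps, ∃ x ∈ stab, t = c * x := by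
    intro t ht
    induction ht using Submonoid.closure_induction_left with
    | one => exact ⟨1, one_reps, 1, one_stab, (mul_one 1).symm⟩
    | mul_left g hg t _ ih =>
      obtain ⟨c, hc, x, hx, rfl⟩ := ih
      obtain ⟨c', hc', y, hy, h⟩ := gens_mul g hg c hc
      exact ⟨c', hc', y * x, mul_stab y hy x hx, by rw [← mul_assoc, h, mul_assoc]⟩
  refine exists_complement hp hk
    ((Submonoid.closure {g | g ∈ gens}).map φ.mapMatrix.toMonoidHom) ?_ ?_
  · rintro _ ⟨t, ht, rfl⟩ h
    obtain ⟨c, hc, x, hx, rfl⟩ := hcl t ht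
    have h2 := ker c hc x hx ((hφ _).symm.trans h)
    rw [h2]
    exact map_one φ.mapMatrix
  · intro A hA
    have hmem : ∀ B, B ∈ 1 :: gens.map (red p r) →
        ∃ x ∈ (Submonoid.closure {g | g ∈ gens}).map φ.mapMatrix.toMonoidHom,
          (redHom p k hk).mapMatrix x = B := by
      intro B hB
      rcases List.mem_cons.mp hB with rfl | hB
      · exact ⟨1, one_mem _, map_one _⟩
      · obtain ⟨g, hg, rfl⟩ := List.mem_map.mp hB
        exact ⟨_, ⟨g, Submonoid.subset_closure hg, rfl⟩, hφ g⟩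
    refine Matrix.diagonal_transvection_induction_of_det_ne_zero
      (fun B => ∃ x ∈ (Submonoid.closure {g | g ∈ gens}).map φ.mapMatrix.toMonoidHom,
        (redHom p k hk).mapMatrix x = B) A hA ?_ ?_ ?_
    · intro d hd
      rw [Matrix.det_diagonal, Finset.prod_ne_zero_iff] at hd
      exact hmem _ (diag d fun i => hd i (Finset.mem_univ i))
    · intro t
      exact hmem _ (trans t.i t.j t.hij t.c)
    · rintro B C _ _ ⟨x, hx, rfl⟩ ⟨y, hy, rfl⟩
      exact ⟨x * y, mul_mem hx hy, map_mul _ _ _⟩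

/-- Lifts to `ℤ[ω]`, `ω² = ω - 2`, of the six transvections in `GL₃(𝔽₂)`, where `ω ↦ 0`. They are
negatives of reflections of order two, and generate Klein's group of order 168. -/
def gens32 : List (Matrix (Fin 3) (Fin 3) (QuadraticAlgebra ℤ (-2) 1)) :=
  [!![⟨1, 0⟩, ⟨1, 0⟩, ⟨0, 1⟩; ⟨0, 0⟩, ⟨-1, 0⟩, ⟨0, 0⟩; ⟨0, 0⟩, ⟨0, 0⟩, ⟨-1, 0⟩],
   !![⟨-1, 0⟩, ⟨0, 1⟩, ⟨1, 0⟩; ⟨0, 0⟩, ⟨1, -1⟩, ⟨0, -1⟩; ⟨0, 0⟩, ⟨-2, 1⟩, ⟨-1, 1⟩],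
   !![⟨-1, -1⟩, ⟨0, 0⟩, ⟨2, -1⟩; ⟨-1, 1⟩, ⟨-1, 0⟩, ⟨-2, 0⟩; ⟨2, -1⟩, ⟨0, 0⟩, ⟨1, 1⟩],
   !![⟨1, 1⟩, ⟨0, 0⟩, ⟨-2, 1⟩; ⟨0, -1⟩, ⟨-1, 0⟩, ⟨1, 0⟩; ⟨-2, 1⟩, ⟨0, 0⟩, ⟨-1, -1⟩],
   !![⟨1, 0⟩, ⟨2, -1⟩, ⟨0, 0⟩; ⟨0, 0⟩, ⟨-1, 0⟩, ⟨0, 0⟩; ⟨-1, 1⟩, ⟨0, 1⟩, ⟨-1, 0⟩],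
   !![⟨-1, 0⟩, ⟨-2, 1⟩, ⟨0, 0⟩; ⟨0, 0⟩, ⟨1, 0⟩, ⟨0, 0⟩; ⟨0, 0⟩, ⟨-1, -1⟩, ⟨-1, 0⟩]]

/-- Representatives of the seven cosets of `stab32` in Klein's group. -/
def reps32 : List (Matrix (Fin 3) (Fin 3) (QuadraticAlgebra ℤ (-2) 1)) :=
  [!![⟨1, 0⟩, ⟨0, 0⟩, ⟨0, 0⟩; ⟨0, 0⟩, ⟨1, 0⟩, ⟨0, 0⟩; ⟨0, 0⟩, ⟨0, 0⟩, ⟨1, 0⟩],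
   !![⟨-1, 0⟩, ⟨0, 0⟩, ⟨0, 0⟩; ⟨0, 1⟩, ⟨0, 0⟩, ⟨-1, 0⟩; ⟨0, -1⟩, ⟨-1, 0⟩, ⟨0, 0⟩],
   !![⟨0, 1⟩, ⟨1, 0⟩, ⟨0, 0⟩; ⟨0, 0⟩, ⟨-1, 0⟩, ⟨-1, 0⟩; ⟨-1, 0⟩, ⟨0, 0⟩, ⟨0, 0⟩],
   !![⟨-1, 0⟩, ⟨0, 0⟩, ⟨0, 0⟩; ⟨0, 0⟩, ⟨-1, 0⟩, ⟨0, 0⟩; ⟨1, -1⟩, ⟨1, 0⟩, ⟨1, 0⟩],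
   !![⟨0, -1⟩, ⟨-1, 0⟩, ⟨0, 0⟩; ⟨-1, 1⟩, ⟨0, 0⟩, ⟨-1, 0⟩; ⟨1, 0⟩, ⟨0, 0⟩, ⟨0, 0⟩],
   !![⟨0, -1⟩, ⟨-1, 0⟩, ⟨0, 0⟩; ⟨0, 0⟩, ⟨1, 0⟩, ⟨1, 0⟩; ⟨1, 0⟩, ⟨0, -1⟩, ⟨-1, 0⟩],
   !![⟨1, 0⟩, ⟨0, -1⟩, ⟨-1, 0⟩; ⟨0, -1⟩, ⟨0, 0⟩, ⟨1, 0⟩; ⟨0, 1⟩, ⟨1, 0⟩, ⟨0, 0⟩]]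

/-- The 24 elements of Klein's group whose reductions fix the covector `(1, 0, 1)` of `𝔽₂³`. -/
def stab32 : List (Matrix (Fin 3) (Fin 3) (QuadraticAlgebra ℤ (-2) 1)) :=
  [!![⟨1, 0⟩, ⟨0, 0⟩, ⟨0, 0⟩; ⟨0, 0⟩, ⟨1, 0⟩, ⟨0, 0⟩; ⟨0, 0⟩, ⟨0, 0⟩, ⟨1, 0⟩],
   !![⟨0, 0⟩, ⟨0, 0⟩, ⟨-1, 0⟩; ⟨0, 0⟩, ⟨1, 0⟩, ⟨1, 0⟩; ⟨1, 0⟩, ⟨0, 0⟩, ⟨0, 0⟩],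
   !![⟨0, 0⟩, ⟨0, 0⟩, ⟨1, 0⟩; ⟨1, 0⟩, ⟨1, 0⟩, ⟨0, 0⟩; ⟨-1, 0⟩, ⟨0, 0⟩, ⟨0, 0⟩],
   !![⟨-1, 0⟩, ⟨0, 0⟩, ⟨0, 0⟩; ⟨1, 0⟩, ⟨1, 0⟩, ⟨1, 0⟩; ⟨0, 0⟩, ⟨0, 0⟩, ⟨-1, 0⟩],
   !![⟨-1, 0⟩, ⟨1, -1⟩, ⟨0, -1⟩; ⟨0, 0⟩, ⟨-1, 0⟩, ⟨0, 0⟩; ⟨0, 0⟩, ⟨1, 1⟩, ⟨1, 0⟩],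
   !![⟨0, 0⟩, ⟨-1, -1⟩, ⟨-1, 0⟩; ⟨0, 0⟩, ⟨0, 1⟩, ⟨1, 0⟩; ⟨-1, 0⟩, ⟨1, -1⟩, ⟨0, -1⟩],
   !![⟨0, 1⟩, ⟨1, 1⟩, ⟨0, 0⟩; ⟨0, 0⟩, ⟨0, -1⟩, ⟨-1, 0⟩; ⟨-1, 0⟩, ⟨-1, 1⟩, ⟨1, 0⟩],
   !![⟨1, 0⟩, ⟨1, -1⟩, ⟨-1, 0⟩; ⟨-1, 0⟩, ⟨-1, 0⟩, ⟨0, 0⟩; ⟨0, 1⟩, ⟨1, 1⟩, ⟨0, 0⟩],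
   !![⟨-1, 0⟩, ⟨-1, 1⟩, ⟨1, 0⟩; ⟨0, 1⟩, ⟨1, 0⟩, ⟨-1, 0⟩; ⟨0, -1⟩, ⟨-1, -1⟩, ⟨0, 0⟩],
   !![⟨0, -1⟩, ⟨-1, -1⟩, ⟨0, 0⟩; ⟨-1, 1⟩, ⟨0, 1⟩, ⟨0, 0⟩; ⟨1, 0⟩, ⟨1, -1⟩, ⟨-1, 0⟩],
   !![⟨0, 0⟩, ⟨1, 1⟩, ⟨1, 0⟩; ⟨-1, 0⟩, ⟨0, -1⟩, ⟨0, -1⟩; ⟨1, 0⟩, ⟨-1, 1⟩, ⟨0, 1⟩],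
   !![⟨1, 0⟩, ⟨-1, 1⟩, ⟨0, 1⟩; ⟨-1, 0⟩, ⟨1, 0⟩, ⟨1, -1⟩; ⟨0, 0⟩, ⟨-1, -1⟩, ⟨-1, 0⟩],
   !![⟨0, -1⟩, ⟨1, -1⟩, ⟨2, -1⟩; ⟨0, 0⟩, ⟨-1, 0⟩, ⟨-1, 0⟩; ⟨1, 0⟩, ⟨1, 1⟩, ⟨1, 1⟩],
   !![⟨1, 1⟩, ⟨0, 0⟩, ⟨-2, 1⟩; ⟨0, -1⟩, ⟨-1, 0⟩, ⟨1, 0⟩; ⟨-2, 1⟩, ⟨0, 0⟩, ⟨-1, -1⟩],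
   !![⟨-2, 1⟩, ⟨0, 0⟩, ⟨-1, -1⟩; ⟨1, 0⟩, ⟨-1, 0⟩, ⟨-1, 1⟩; ⟨-1, -1⟩, ⟨0, 0⟩, ⟨2, -1⟩],
   !![⟨-1, 0⟩, ⟨-1, -1⟩, ⟨-1, -1⟩; ⟨1, 0⟩, ⟨0, 1⟩, ⟨0, 1⟩; ⟨0, -1⟩, ⟨1, -1⟩, ⟨2, -1⟩],
   !![⟨1, 1⟩, ⟨1, 1⟩, ⟨0, 1⟩; ⟨1, -1⟩, ⟨0, -1⟩, ⟨0, 0⟩; ⟨-2, 1⟩, ⟨-1, 1⟩, ⟨-1, 0⟩],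
   !![⟨2, -1⟩, ⟨0, 0⟩, ⟨1, 1⟩; ⟨-2, 0⟩, ⟨-1, 0⟩, ⟨0, -1⟩; ⟨1, 1⟩, ⟨0, 0⟩, ⟨-2, 1⟩],
   !![⟨2, -1⟩, ⟨1, -1⟩, ⟨1, 0⟩; ⟨-1, 0⟩, ⟨-1, 0⟩, ⟨-1, 0⟩; ⟨1, 1⟩, ⟨1, 1⟩, ⟨0, 1⟩],
   !![⟨-2, 1⟩, ⟨-1, 1⟩, ⟨-1, 0⟩; ⟨2, 0⟩, ⟨1, 0⟩, ⟨0, 1⟩; ⟨-1, -1⟩, ⟨-1, -1⟩, ⟨0, -1⟩],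
   !![⟨-1, -1⟩, ⟨-1, -1⟩, ⟨0, -1⟩; ⟨0, 1⟩, ⟨0, 1⟩, ⟨-1, 1⟩; ⟨2, -1⟩, ⟨1, -1⟩, ⟨1, 0⟩],
   !![⟨-1, -1⟩, ⟨0, 0⟩, ⟨2, -1⟩; ⟨-1, 1⟩, ⟨-1, 0⟩, ⟨-2, 0⟩; ⟨2, -1⟩, ⟨0, 0⟩, ⟨1, 1⟩],
   !![⟨1, 0⟩, ⟨1, 1⟩, ⟨1, 1⟩; ⟨0, -1⟩, ⟨0, -1⟩, ⟨1, -1⟩; ⟨0, 1⟩, ⟨-1, 1⟩, ⟨-2, 1⟩],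
   !![⟨0, 1⟩, ⟨-1, 1⟩, ⟨-2, 1⟩; ⟨1, -1⟩, ⟨1, 0⟩, ⟨2, 0⟩; ⟨-1, 0⟩, ⟨-1, -1⟩, ⟨-1, -1⟩]]

/-- Integral lifts of the two transvections in `GL₂(𝔽₂)`, generating a copy of `S₃`. The ring is the
one used for `GL₃(𝔽₂)`, so that `2` is split in it. -/
def gens22 : List (Matrix (Fin 2) (Fin 2) (QuadraticAlgebra ℤ (-2) 1)) :=
  [!![⟨-1, 0⟩, ⟨1, 0⟩; ⟨0, 0⟩, ⟨1, 0⟩],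
   !![⟨1, 0⟩, ⟨0, 0⟩; ⟨1, 0⟩, ⟨-1, 0⟩]]

/-- Representatives of the three cosets of `stab22` in `S₃`. -/
def reps22 : List (Matrix (Fin 2) (Fin 2) (QuadraticAlgebra ℤ (-2) 1)) :=
  [!![⟨1, 0⟩, ⟨0, 0⟩; ⟨0, 0⟩, ⟨1, 0⟩],
   !![⟨0, 0⟩, ⟨-1, 0⟩; ⟨-1, 0⟩, ⟨0, 0⟩],
   !![⟨-1, 0⟩, ⟨1, 0⟩; ⟨0, 0⟩, ⟨1, 0⟩]]

/-- A subgroup of order two of `S₃`. -/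
def stab22 : List (Matrix (Fin 2) (Fin 2) (QuadraticAlgebra ℤ (-2) 1)) :=
  [!![⟨1, 0⟩, ⟨0, 0⟩; ⟨0, 0⟩, ⟨1, 0⟩],
   !![⟨1, 0⟩, ⟨0, 0⟩; ⟨1, 0⟩, ⟨-1, 0⟩]]

/-- Lifts to `ℤ[√-2]` of the transvections and the nontrivial invertible diagonal matrices in
`GL₂(𝔽₃)`, where `√-2 ↦ 1`. They generate the reflection group `G₁₂`, of order 48. -/
def gens23 : List (Matrix (Fin 2) (Fin 2) (QuadraticAlgebra ℤ (-2) 0)) :=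
  [!![⟨1, 0⟩, ⟨-1, -1⟩; ⟨1, -1⟩, ⟨-2, 0⟩],
   !![⟨-2, 0⟩, ⟨1, 1⟩; ⟨-1, 1⟩, ⟨1, 0⟩],
   !![⟨0, 1⟩, ⟨1, -1⟩; ⟨1, 0⟩, ⟨-1, -1⟩],
   !![⟨-1, -1⟩, ⟨-1, 1⟩; ⟨-1, 0⟩, ⟨0, 1⟩],
   !![⟨1, 0⟩, ⟨0, 0⟩; ⟨1, -1⟩, ⟨-1, 0⟩],
   !![⟨-1, 0⟩, ⟨0, 0⟩; ⟨-1, 1⟩, ⟨1, 0⟩],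
   !![⟨-1, 0⟩, ⟨0, 0⟩; ⟨0, 0⟩, ⟨-1, 0⟩]]

/-- Representatives of the eight cosets of `stab23` in `G₁₂`. -/
def reps23 : List (Matrix (Fin 2) (Fin 2) (QuadraticAlgebra ℤ (-2) 0)) :=
  [!![⟨1, 0⟩, ⟨0, 0⟩; ⟨0, 0⟩, ⟨1, 0⟩],
   !![⟨-1, 0⟩, ⟨0, 0⟩; ⟨0, 0⟩, ⟨-1, 0⟩],
   !![⟨-1, 0⟩, ⟨1, 0⟩; ⟨-1, 0⟩, ⟨0, 0⟩],
   !![⟨0, -1⟩, ⟨-1, 0⟩; ⟨-1, 0⟩, ⟨0, 0⟩],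
   !![⟨0, 0⟩, ⟨-1, 0⟩; ⟨-1, 0⟩, ⟨0, 1⟩],
   !![⟨0, 0⟩, ⟨-1, 0⟩; ⟨1, 0⟩, ⟨-1, 0⟩],
   !![⟨0, 0⟩, ⟨1, 0⟩; ⟨-1, 0⟩, ⟨1, 0⟩],
   !![⟨0, 0⟩, ⟨1, 0⟩; ⟨1, 0⟩, ⟨0, -1⟩]]

/-- The six elements of `G₁₂` whose reductions fix the column vector `(0, 1)` of `𝔽₃²`. -/
def stab23 : List (Matrix (Fin 2) (Fin 2) (QuadraticAlgebra ℤ (-2) 0)) :=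
  [!![⟨1, 0⟩, ⟨0, 0⟩; ⟨0, 0⟩, ⟨1, 0⟩],
   !![⟨-1, 0⟩, ⟨0, 0⟩; ⟨-1, 1⟩, ⟨1, 0⟩],
   !![⟨-1, -1⟩, ⟨-1, 1⟩; ⟨-1, 0⟩, ⟨0, 1⟩],
   !![⟨0, -1⟩, ⟨-1, 1⟩; ⟨-1, -1⟩, ⟨0, 1⟩],
   !![⟨0, 1⟩, ⟨1, -1⟩; ⟨1, 0⟩, ⟨-1, -1⟩],
   !![⟨1, 1⟩, ⟨1, -1⟩; ⟨2, 0⟩, ⟨-1, -1⟩]]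

set_option maxRecDepth 100000 in
theorem complement_22 {k : ℕ} (hk : 1 ≤ k) :
    ∃ H : Subgroup (Matrix (Fin 2) (Fin 2) (ZMod (2 ^ k)))ˣ,
      IsComplementOf H
        (onePlus (Matrix (Fin 2) (Fin 2) (ZMod (2 ^ k))) (Ideal.jacobson ⊥)) :=
  complement_of_lists (by norm_num) hk 0 (by norm_num) (by norm_num) gens22 reps22 stab22
    (by decide +kernel) (by decide +kernel) (by decide +kernel) (by decide +kernel)
    (by decide +kernel) (by decide +kernel) (by decide +kernel)

set_option maxRecDepth 100000 in
theorem complement_32 {k : ℕ} (hk : 1 ≤ k) :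
    ∃ H : Subgroup (Matrix (Fin 3) (Fin 3) (ZMod (2 ^ k)))ˣ,
      IsComplementOf H
        (onePlus (Matrix (Fin 3) (Fin 3) (ZMod (2 ^ k))) (Ideal.jacobson ⊥)) :=
  complement_of_lists (by norm_num) hk 0 (by norm_num) (by norm_num) gens32 reps32 stab32
    (by decide +kernel) (by decide +kernel) (by decide +kernel) (by decide +kernel)
    (by decide +kernel) (by decide +kernel) (by decide +kernel)

set_option maxRecDepth 100000 in
theorem complement_23 {k : ℕ} (hk : 1 ≤ k) :
    ∃ H : Subgroup (Matrix (Fin 2) (Fin 2) (ZMod (3 ^ k)))ˣ,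
      IsComplementOf H
        (onePlus (Matrix (Fin 2) (Fin 2) (ZMod (3 ^ k))) (Ideal.jacobson ⊥)) :=
  complement_of_lists (by norm_num) hk 1 (by norm_num) (by norm_num) gens23 reps23 stab23
    (by decide +kernel) (by decide +kernel) (by decide +kernel) (by decide +kernel)
    (by decide +kernel) (by decide +kernel) (by decide +kernel)

end JacobsonComplement

/-- For `R = Mat_n(ℤ/p^k)`, the normal subgroup `J(R) = 1 + Jac(R)` has a
complement in the unit group `G(R)` iff `k = 1`, or `k > 1` and `p = 2` with `n ≤ 3`, or
`k > 1` and `p = 3` with `n ≤ 2`, or `k > 1` and `n = 1`. -/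
theorem complement_onePlus_jacobson_matrix_iff (p n k : ℕ) (hp : p.Prime)
    (hn : 1 ≤ n) (hk : 1 ≤ k) :
    (∃ H : Subgroup (Matrix (Fin n) (Fin n) (ZMod (p ^ k)))ˣ,
        IsComplementOf H (onePlus (Matrix (Fin n) (Fin n) (ZMod (p ^ k))) (Ideal.jacobson ⊥))) ↔
      k = 1 ∨ (1 < k ∧ p = 2 ∧ n ≤ 3) ∨ (1 < k ∧ p = 3 ∧ n ≤ 2) ∨ (1 < k ∧ n = 1) := by
  constructor
  · intro h
    by_cases hk1 : k = 1
    · exact Or.inl hk1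
    have hk2 : 1 < k := by omega
    by_cases hn1 : n = 1
    · exact Or.inr (Or.inr (Or.inr ⟨hk2, hn1⟩))
    rcases JacobsonComplement.necessity hp hk hk2 (by omega) h with h | h
    · exact Or.inr (Or.inl ⟨hk2, h⟩)
    · exact Or.inr (Or.inr (Or.inl ⟨hk2, h⟩))
  · rintro (rfl | ⟨_, rfl, hn3⟩ | ⟨_, rfl, hn2⟩ | ⟨_, rfl⟩)
    · exact JacobsonComplement.complement_of_k_eq_one hp hk
    · interval_cases n
      · exact JacobsonComplement.complement_of_n_eq_one hp hk
      · exact JacobsonComplement.complement_22 hk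
      · exact JacobsonComplement.complement_32 hk
    · interval_cases n
      · exact JacobsonComplement.complement_of_n_eq_one hp hk
      · exact JacobsonComplement.complement_23 hk
    · exact JacobsonComplement.complement_of_n_eq_one hp hk
end

section
/- Let p be a prime and k ≥ 2 an integer, and let R = Mat_n(Z_{p^k}). If J(R) has a complement in G(R), then for every m ≤ n, J(S) has a complement in G(S), where S = Mat_m(Z_{p^2}). -/
/-!
A complement `H` of `J(Mat_n(ℤ/p^k))` is the image of a lift of `GL_n(𝔽_p)` to `GL_n(ℤ/p^k)`.
Restrict this lift to the block matrices `diag(a, 1)` with `a ∈ GL_m(𝔽_p)`, reduce it modulo `p²`,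
and write its values as `[[A, B], [C, D]]`. The off-diagonal blocks vanish modulo `p`, so in a
product `[[A, B], [C, D]] * [[A', B'], [C', D']]` the term `B * C'` of the top left block is zero
modulo `p²`. Hence taking the top left block is multiplicative (`toBlocks₁₁_mul_of_map`), and it is
a lift of `GL_m(𝔽_p)` to `GL_m(ℤ/p²)`; its image is the complement sought.

The argument is carried out in `exists_complement_of_blocks` for surjections `A → S → F` of local
rings onto a field `F` such that the kernel of `S → F` has square zero. The Jacobson radical of a
matrix ring over a local ring consists of the matrices that vanish over the residue field
(`mem_onePlus_jacobson_iff`).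
-/

open Pointwise

lemma isLocalHom_castHom_prime_pow (p k : ℕ) [Fact p.Prime] (hk : k ≠ 0) :
    IsLocalHom (ZMod.castHom (dvd_pow_self p hk) (ZMod p)) := by
  refine ⟨fun x hx => ?_⟩
  obtain ⟨a, rfl⟩ := ZMod.natCast_zmod_surjective x
  rw [map_natCast, ZMod.isUnit_iff_coprime] at hx
  rw [ZMod.isUnit_iff_coprime]
  exact Nat.Coprime.pow_right k hx

lemma mem_onePlus_jacobson_iff {A F n : Type*} [CommRing A] [IsLocalRing A] [Field F]
    [Fintype n] [DecidableEq n] (φ : A →+* F) (hφ : Function.Surjective φ)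
    (u : (Matrix n n A)ˣ) :
    u ∈ onePlus (Matrix n n A) (Ideal.jacobson ⊥) ↔ φ.mapMatrix (u : Matrix n n A) = 1 := by
  have hjac : (Ideal.jacobson (⊥ : Ideal (Matrix n n A)))
      = (RingHom.ker φ).matrix n := by
    rw [IsLocalRing.ker_eq_maximalIdeal φ hφ,
      ← IsLocalRing.jacobson_eq_maximalIdeal (⊥ : Ideal A) bot_ne_top]
    have := congrArg TwoSidedIdeal.asIdeal
      (TwoSidedIdeal.matrix_jacobson_bot (R := A) (n := n))
    simpa [TwoSidedIdeal.asIdeal_jacobson, TwoSidedIdeal.asIdeal_matrix] using this.symm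
  change (u : Matrix n n A) - 1 ∈ Ideal.jacobson ⊥ ↔ _
  rw [hjac, Ideal.mem_matrix, ← sub_eq_zero, ← map_one φ.mapMatrix, ← map_sub, ← Matrix.ext_iff]
  rfl

/-- If `P` and `Q` are block diagonal modulo an ideal of square zero, then the top left block of
`P * Q` is the product of the top left blocks. -/
lemma toBlocks₁₁_mul_of_map {S F m d : Type*} [CommRing S] [CommRing F] [Fintype m] [Fintype d]
    [DecidableEq m] [DecidableEq d] (β : S →+* F)
    (hsq : ∀ x y, β x = 0 → β y = 0 → x * y = 0) {P Q : Matrix (m ⊕ d) (m ⊕ d) S}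
    {a b : Matrix m m F} {a' b' : Matrix d d F}
    (hP : β.mapMatrix P = Matrix.fromBlocks a 0 0 a')
    (hQ : β.mapMatrix Q = Matrix.fromBlocks b 0 0 b') :
    (P * Q).toBlocks₁₁ = P.toBlocks₁₁ * Q.toBlocks₁₁ := by
  ext i j
  simp only [Matrix.toBlocks₁₁, Matrix.of_apply, Matrix.mul_apply, Fintype.sum_sum_type]
  rw [add_eq_left]
  refine Finset.sum_eq_zero fun l _ => hsq _ _ ?_ ?_
  · exact congrFun (congrFun hP (Sum.inl i)) (Sum.inr l)
  · exact congrFun (congrFun hQ (Sum.inr l)) (Sum.inl j)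

/-- For surjections `A → S → F` of local rings with `F` a field and `ker (S → F)` of square zero,
a complement over `A` in size `m ⊕ d` yields one over `S` in size `m`: the top left blocks over `S`
of those elements of `H` that reduce to `diag(a, 1)` over `F`. -/
lemma exists_complement_of_blocks {A S F N m d : Type*} [CommRing A] [CommRing S] [Field F]
    [IsLocalRing A] [IsLocalRing S]
    [Fintype N] [Fintype m] [Fintype d] [DecidableEq N] [DecidableEq m] [DecidableEq d]
    (e : N ≃ m ⊕ d) (α : A →+* S) (β : S →+* F)
    (hα : Function.Surjective α) (hβ : Function.Surjective β)
    (hsq : ∀ x y, β x = 0 → β y = 0 → x * y = 0)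
    (H : Subgroup (Matrix N N A)ˣ)
    (hH : IsComplementOf H (onePlus (Matrix N N A) (Ideal.jacobson ⊥))) :
    ∃ H : Subgroup (Matrix m m S)ˣ,
      IsComplementOf H (onePlus (Matrix m m S) (Ideal.jacobson ⊥)) := by
  let E := Matrix.reindexRingEquiv A e
  let T : Matrix N N A →+* Matrix (m ⊕ d) (m ⊕ d) S := α.mapMatrix.comp E.toRingHom
  have hmemA : ∀ u : (Matrix N N A)ˣ, u ∈ onePlus (Matrix N N A) (Ideal.jacobson ⊥) ↔
      β.mapMatrix (T u) = 1 := by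
    intro u
    rw [mem_onePlus_jacobson_iff (β.comp α) (hβ.comp hα)]
    have h1 : β.mapMatrix (T u) = Matrix.reindexRingEquiv F e ((β.comp α).mapMatrix u) := rfl
    rw [h1]
    exact (map_eq_one_iff (Matrix.reindexRingEquiv F e)
      (Matrix.reindexRingEquiv F e).injective).symm
  have hmemS := fun u : (Matrix m m S)ˣ => mem_onePlus_jacobson_iff β hβ u
  have blocks : ∀ P : Matrix (m ⊕ d) (m ⊕ d) S,
      (β.mapMatrix P).toBlocks₁₁ = β.mapMatrix P.toBlocks₁₁ := fun P => rfl
  have one11 : ∀ R : Type _, ∀ _ : CommRing R,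
      (1 : Matrix (m ⊕ d) (m ⊕ d) R).toBlocks₁₁ = 1 := by
    intro R _
    rw [← Matrix.fromBlocks_one, Matrix.toBlocks_fromBlocks₁₁]
  obtain ⟨hinf, hprod⟩ := hH
  let H' : Subgroup (Matrix m m S)ˣ :=
    { carrier := {u | ∃ h ∈ H, (T h).toBlocks₁₁ = u ∧
        β.mapMatrix (T h) = Matrix.fromBlocks (β.mapMatrix (u : Matrix m m S)) 0 0 1}
      one_mem' := by
        refine ⟨1, H.one_mem, ?_, ?_⟩
        · rw [Units.val_one, map_one, one11, Units.val_one]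
        · simp only [Units.val_one, map_one, Matrix.fromBlocks_one]
      mul_mem' := by
        rintro u v ⟨h, hh, h1, h2⟩ ⟨g, hg, g1, g2⟩
        refine ⟨h * g, H.mul_mem hh hg, ?_, ?_⟩
        · rw [Units.val_mul, map_mul, toBlocks₁₁_mul_of_map β hsq h2 g2, h1, g1, Units.val_mul]
        · rw [Units.val_mul, map_mul, map_mul, h2, g2, Matrix.fromBlocks_multiply, Units.val_mul,
            map_mul]
          simp
      inv_mem' := by
        rintro u ⟨h, hh, h1, h2⟩
        have h3 : β.mapMatrix (T ↑h⁻¹) =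
            Matrix.fromBlocks (β.mapMatrix ((u⁻¹ : (Matrix m m S)ˣ) : Matrix m m S)) 0 0 1 := by
          refine left_inv_eq_right_inv (a := β.mapMatrix (T h)) ?_ ?_
          · rw [← map_mul, ← map_mul, Units.inv_mul, map_one, map_one]
          · rw [h2, Matrix.fromBlocks_multiply, ← map_mul, Units.mul_inv]
            simp
        refine ⟨h⁻¹, H.inv_mem hh, ?_, h3⟩
        refine left_inv_eq_right_inv (a := (u : Matrix m m S)) ?_ (Units.mul_inv u)
        rw [← h1, ← toBlocks₁₁_mul_of_map β hsq h3 h2, ← map_mul, Units.inv_mul, map_one, one11] }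
  refine ⟨H', ?_, ?_⟩
  · rw [eq_bot_iff]
    rintro u ⟨⟨h, hh, h1, h2⟩, hu⟩
    have hu' := (hmemS u).1 hu
    have : h ∈ H ⊓ onePlus (Matrix N N A) (Ideal.jacobson ⊥) := by
      refine ⟨hh, (hmemA h).2 ?_⟩
      rw [h2, hu', Matrix.fromBlocks_one]
    rw [hinf, Subgroup.mem_bot] at this
    subst this
    rw [Subgroup.mem_bot]
    ext1
    rw [← h1, Units.val_one, map_one, one11, Units.val_one]
  · refine Set.eq_univ_of_forall fun g => ?_
    have hloc := IsLocalHom.of_surjective α hα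
    have hlocβ := IsLocalHom.of_surjective β hβ
    -- `x` lifts `diag(g, 1)`; its determinant is a unit since it maps to `det g` under `α`.
    obtain ⟨y, hy⟩ : ∃ y : Matrix (m ⊕ d) (m ⊕ d) A,
        y.map α = Matrix.fromBlocks (g : Matrix m m S) 0 0 1 :=
      ⟨(Matrix.fromBlocks (g : Matrix m m S) 0 0 1).map (Function.surjInv hα),
        Matrix.ext fun _ _ => Function.surjInv_eq hα _⟩
    obtain ⟨x, hx⟩ : ∃ x, E x = y := E.surjective y
    have hTx : T x = Matrix.fromBlocks (g : Matrix m m S) 0 0 1 := by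
      rw [← hy, ← hx]; rfl
    have hy' : IsUnit y := by
      rw [Matrix.isUnit_iff_isUnit_det]
      refine isUnit_of_map_unit α _ ?_
      rw [RingHom.map_det, RingHom.mapMatrix_apply, hy, Matrix.det_fromBlocks_zero₂₁,
        Matrix.det_one, mul_one, ← Matrix.isUnit_iff_isUnit_det]
      exact g.isUnit
    have hxu : IsUnit x := by
      rw [← hx] at hy'
      exact (MulEquiv.isUnit_map E).1 hy'
    obtain ⟨x, rfl⟩ := hxu
    obtain ⟨h, hh, j, hj, hhj⟩ := Set.mem_mul.1 (hprod.symm ▸ Set.mem_univ x)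
    have hred : β.mapMatrix (T h) =
        Matrix.fromBlocks (β.mapMatrix (g : Matrix m m S)) 0 0 1 := by
      have hj' := (hmemA j).1 hj
      have : β.mapMatrix (T x) = β.mapMatrix (T h) := by
        rw [← hhj, Units.val_mul, map_mul, map_mul, hj', mul_one]
      rw [← this, hTx, RingHom.mapMatrix_apply, Matrix.fromBlocks_map]
      simp
    have h11 : β.mapMatrix (T h).toBlocks₁₁ = β.mapMatrix (g : Matrix m m S) := by
      rw [← blocks, hred, Matrix.toBlocks_fromBlocks₁₁]
    have hu : IsUnit (T h).toBlocks₁₁ := by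
      rw [Matrix.isUnit_iff_isUnit_det]
      refine isUnit_of_map_unit β _ ?_
      rw [RingHom.map_det, h11, ← Matrix.isUnit_iff_isUnit_det]
      exact g.isUnit.map β.mapMatrix
    obtain ⟨u, hu⟩ := hu
    refine Set.mem_mul.2 ⟨u, ⟨h, hh, hu.symm, ?_⟩, u⁻¹ * g, ?_, mul_inv_cancel_left u g⟩
    · rw [hu, h11, hred]
    · refine (hmemS _).2 ?_
      rw [Units.val_mul, map_mul, ← h11, ← hu, ← map_mul, Units.inv_mul, map_one]

/-- If `J(Mat_n(ℤ/p^k))` has a complement (`k ≥ 2`), then for every `m ≤ n`,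
`J(Mat_m(ℤ/p²))` has a complement. -/
theorem complement_of_complement_matrix (p n k : ℕ) (hp : p.Prime) (hk : 2 ≤ k)
    (h : ∃ H : Subgroup (Matrix (Fin n) (Fin n) (ZMod (p ^ k)))ˣ,
        IsComplementOf H (onePlus (Matrix (Fin n) (Fin n) (ZMod (p ^ k))) (Ideal.jacobson ⊥))) :
    ∀ m ≤ n, ∃ H : Subgroup (Matrix (Fin m) (Fin m) (ZMod (p ^ 2)))ˣ,
        IsComplementOf H (onePlus (Matrix (Fin m) (Fin m) (ZMod (p ^ 2))) (Ideal.jacobson ⊥)) := by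
  intro m hm
  obtain ⟨d, rfl⟩ := Nat.exists_eq_add_of_le hm
  obtain ⟨H, hH⟩ := h
  have : Fact p.Prime := ⟨hp⟩
  have hk0 : k ≠ 0 := by omega
  have := isLocalHom_castHom_prime_pow p k hk0
  have := isLocalHom_castHom_prime_pow p 2 two_ne_zero
  have : IsLocalRing (ZMod (p ^ k)) :=
    RingHom.domain_isLocalRing (ZMod.castHom (dvd_pow_self p hk0) (ZMod p))
  have : IsLocalRing (ZMod (p ^ 2)) :=
    RingHom.domain_isLocalRing (ZMod.castHom (dvd_pow_self p two_ne_zero) (ZMod p))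
  refine exists_complement_of_blocks finSumFinEquiv.symm
    (ZMod.castHom (pow_dvd_pow p hk) (ZMod (p ^ 2)))
    (ZMod.castHom (dvd_pow_self p two_ne_zero) (ZMod p))
    (ZMod.castHom_surjective _) (ZMod.castHom_surjective _) ?_ H hH
  intro x y hx hy
  obtain ⟨a, rfl⟩ := ZMod.natCast_zmod_surjective x
  obtain ⟨b, rfl⟩ := ZMod.natCast_zmod_surjective y
  rw [map_natCast, ZMod.natCast_eq_zero_iff] at hx hy
  rw [← Nat.cast_mul, ZMod.natCast_eq_zero_iff, pow_two]
  exact mul_dvd_mul hx hy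
end

section
/- Let p be a prime, k ≥ 2 an integer, and R = Mat_n(Z_{p^k}). If p = 2 and n ≥ 4, or p = 3 and n ≥ 3, then J(R) has no complement in G(R). -/
/-!
The radical of `Mat_n(ℤ/p^k)` is `p Mat_n`, so a complement `H` contains, for each integer matrix
`N` with `N ^ 2 = 0`, an element `1 + N + p A` (modulo `p ^ k`), and any element of `H` that is `1`
modulo `p` is equal to `1`. Elements `1 + N`, with `N` in a space of strictly upper block
triangular matrices, form an elementary abelian `p`-group modulo `p`; it is already impossible to
lift this group to one of exponent `p` modulo `p ^ 2`. Only the congruences modulo `p ^ 2` are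
kept, over the integers (`exists_lifts`).

For `p = 3`, expanding `(1 + N + 3 A) ^ 3` gives `N + N A N = 0` modulo `3` (`three_single`). For
`N = e_i f` with `f` in the plane spanned by two coordinate forms vanishing at `e_i`, this says
`f A_f e_i = -1` whenever `f ≠ 0`. Since `A_{N + M} = A_N + A_M + N A_M + A_N M`, the left side is
a quadratic form `Q` in `f`, and `Q (f + g) + Q (f - g) = 2 Q f + 2 Q g` reads `-2 = -4`,
a contradiction modulo `3`.

For `p = 2`, the square of `1 + N + 2 A` gives `N + N A + A N = 0` modulo `2` (`two_single`), and
products of two lifts give the polarized relation (`two_pair`). Taking for `N` the four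
matrix units of a `2 × 2` block off the diagonal, which requires `n ≥ 4`, the resulting linear
equations over `𝔽₂` for the entries of the matrices `A` have no solution (`two_contradiction`).
-/

open Pointwise

theorem mem_onePlus {R : Type*} [Ring R] {I : Ideal R} {u : Rˣ} :
    u ∈ onePlus R I ↔ (u : R) - 1 ∈ I := Iff.rfl

theorem single_one_mul_apply {ι R : Type*} [Fintype ι] [DecidableEq ι] [Ring R]
    (i j a b : ι) (A : Matrix ι ι R) :
    (Matrix.single i j 1 * A : Matrix ι ι R) a b = if a = i then A j b else 0 := by
  split_ifs with h
  · subst h; simp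
  · rw [Matrix.single_mul_apply_of_ne _ _ _ _ _ h]

theorem mul_single_one_apply {ι R : Type*} [Fintype ι] [DecidableEq ι] [Ring R]
    (i j a b : ι) (A : Matrix ι ι R) :
    (A * Matrix.single i j 1 : Matrix ι ι R) a b = if b = j then A a i else 0 := by
  split_ifs with h
  · subst h; simp
  · rw [Matrix.mul_single_apply_of_ne _ _ _ _ _ h]

/-! ### Reduction of integer matrices and the radical -/

/-- Reduction of integer matrices modulo `m`. -/
def red (n m : ℕ) : Matrix (Fin n) (Fin n) ℤ →+* Matrix (Fin n) (Fin n) (ZMod m) :=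
  (Int.castRingHom (ZMod m)).mapMatrix

theorem red_apply {n m : ℕ} (A : Matrix (Fin n) (Fin n) ℤ) (i j : Fin n) :
    red n m A i j = (A i j : ZMod m) := rfl

theorem red_single {n m : ℕ} (i j : Fin n) :
    red n m (Matrix.single i j 1) = Matrix.single i j 1 := by
  ext a b
  simp [red, Matrix.single_apply]

theorem red_surjective (n m : ℕ) : Function.Surjective (red n m) := fun X =>
  ⟨X.map (fun x => (ZMod.intCast_surjective x).choose), by
    ext i j
    simpa [red_apply] using (ZMod.intCast_surjective (X i j)).choose_spec⟩

theorem red_eq_zero_iff {n m : ℕ} (A : Matrix (Fin n) (Fin n) ℤ) :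
    red n m A = 0 ↔ ∃ C : Matrix (Fin n) (Fin n) ℤ, A = (m : ℤ) • C := by
  constructor
  · intro h
    have h' : ∀ i j, ∃ c, A i j = (m : ℤ) * c := fun i j =>
      (ZMod.intCast_zmod_eq_zero_iff_dvd _ _).1 (congrFun (congrFun h i) j)
    choose C hC using h'
    exact ⟨Matrix.of C, by ext i j; simp [hC i j]⟩
  · rintro ⟨C, rfl⟩
    ext i j
    rw [red_apply, Matrix.smul_apply]
    simp

theorem mem_jacobson_zmod {p k : ℕ} (hp : p.Prime) (hk : k ≠ 0) (a : ℤ) :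
    (a : ZMod (p ^ k)) ∈ (Ideal.jacobson ⊥ : Ideal (ZMod (p ^ k))) ↔ (p : ℤ) ∣ a := by
  have : Fact p.Prime := ⟨hp⟩
  constructor
  · intro h
    let f := ZMod.castHom (dvd_pow_self p hk) (ZMod p)
    have hm : (RingHom.ker f).IsMaximal :=
      RingHom.ker_isMaximal_of_surjective f (ZMod.castHom_surjective _)
    have h2 : (a : ZMod (p ^ k)) ∈ RingHom.ker f :=
      (Ideal.mem_sInf.1 h) ⟨bot_le, hm⟩
    rw [RingHom.mem_ker, map_intCast] at h2
    exact (ZMod.intCast_zmod_eq_zero_iff_dvd _ _).1 h2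
  · rintro ⟨c, rfl⟩
    have hn : IsNilpotent (((p : ℤ) * c : ℤ) : ZMod (p ^ k)) := by
      refine ⟨k, ?_⟩
      push_cast
      rw [mul_pow, ← Nat.cast_pow, ZMod.natCast_self, zero_mul]
    exact Ideal.radical_le_jacobson hn

theorem red_mem_jacobson {n p k : ℕ} (hp : p.Prime) (hk : k ≠ 0)
    (A : Matrix (Fin n) (Fin n) ℤ) :
    red n (p ^ k) A ∈ (Ideal.jacobson ⊥ : Ideal (Matrix (Fin n) (Fin n) (ZMod (p ^ k)))) ↔
      ∃ C : Matrix (Fin n) (Fin n) ℤ, A = (p : ℤ) • C := by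
  have hJ : (Ideal.jacobson ⊥ : Ideal (Matrix (Fin n) (Fin n) (ZMod (p ^ k))))
      = (Ideal.jacobson ⊥ : Ideal (ZMod (p ^ k))).matrix (Fin n) := by
    have := congrArg TwoSidedIdeal.asIdeal
      (TwoSidedIdeal.matrix_jacobson_bot (R := ZMod (p ^ k)) (n := Fin n))
    simpa only [TwoSidedIdeal.asIdeal_matrix, TwoSidedIdeal.asIdeal_jacobson,
      TwoSidedIdeal.bot_asIdeal] using this.symm
  rw [hJ, ← red_eq_zero_iff]
  simp only [Ideal.mem_matrix, red_apply, mem_jacobson_zmod hp hk]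
  rw [← Matrix.ext_iff]
  simp [red_apply, ZMod.intCast_zmod_eq_zero_iff_dvd]

/-! ### Integer lifts of a complement -/

/-- A complement is turned into the set `S` of integer matrices representing its elements:
`S` is multiplicatively closed, contains a lift of every `1 + N` with `N ^ 2 = 0`, and an
element of `S` that is `1` modulo `p` is already `1` modulo `p ^ 2`. -/
theorem exists_lifts {n p k : ℕ} (hp : p.Prime) (hk : 2 ≤ k)
    (h : ∃ H : Subgroup (Matrix (Fin n) (Fin n) (ZMod (p ^ k)))ˣ,
        IsComplementOf H (onePlus (Matrix (Fin n) (Fin n) (ZMod (p ^ k))) (Ideal.jacobson ⊥))) :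
    ∃ S : Matrix (Fin n) (Fin n) ℤ → Prop,
      (∀ X Y, S X → S Y → S (X * Y)) ∧
      (∀ N, N * N = 0 → ∃ A, S (1 + N + (p : ℤ) • A)) ∧
      (∀ B, S (1 + (p : ℤ) • B) → ∃ C, B = (p : ℤ) • C) := by
  obtain ⟨H, hbot, htop⟩ := h
  have hk0 : k ≠ 0 := by omega
  refine ⟨fun X => ∃ x ∈ H, (x : Matrix (Fin n) (Fin n) (ZMod (p ^ k))) = red n (p ^ k) X,
    ?_, ?_, ?_⟩
  · rintro X Y ⟨x, hx, hX⟩ ⟨y, hy, hY⟩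
    exact ⟨x * y, H.mul_mem hx hy, by rw [Units.val_mul, hX, hY, map_mul]⟩
  · intro N hN
    let g : (Matrix (Fin n) (Fin n) (ZMod (p ^ k)))ˣ :=
      ⟨red n _ (1 + N), red n _ (1 - N),
        by rw [← map_mul, show (1 + N) * (1 - N) = 1 - N * N by noncomm_ring, hN]; simp,
        by rw [← map_mul, show (1 - N) * (1 + N) = 1 - N * N by noncomm_ring, hN]; simp⟩
    have hg : g ∈ (H : Set (Matrix (Fin n) (Fin n) (ZMod (p ^ k)))ˣ) *
        (↑(onePlus (Matrix (Fin n) (Fin n) (ZMod (p ^ k))) (Ideal.jacobson ⊥)) : Set (Matrix (Fin n) (Fin n) (ZMod (p ^ k)))ˣ) := by rw [htop]; trivial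
    obtain ⟨x, hx, y, hy, hxy⟩ := Set.mem_mul.1 hg
    obtain ⟨X, hX⟩ := red_surjective n (p ^ k) (x : Matrix (Fin n) (Fin n) (ZMod (p ^ k)))
    have h1 : red n (p ^ k) (1 + N - X) ∈
        (Ideal.jacobson ⊥ : Ideal (Matrix (Fin n) (Fin n) (ZMod (p ^ k)))) := by
      have h2 : red n (p ^ k) (1 + N - X) = x * ((y : Matrix (Fin n) (Fin n) (ZMod (p ^ k))) - 1) := by
        rw [map_sub, hX, mul_sub, ← Units.val_mul, hxy, mul_one]
      rw [h2]
      exact Ideal.mul_mem_left _ _ (mem_onePlus.1 hy)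
    obtain ⟨C, hC⟩ := (red_mem_jacobson hp hk0 _).1 h1
    refine ⟨-C, x, hx, ?_⟩
    rw [← hX, smul_neg, ← hC]
    congr 1
    abel
  · rintro B ⟨x, hx, hB⟩
    have hxJ : x ∈ onePlus (Matrix (Fin n) (Fin n) (ZMod (p ^ k))) (Ideal.jacobson ⊥) := by
      rw [mem_onePlus, hB, map_add, map_one, add_sub_cancel_left]
      exact (red_mem_jacobson hp hk0 _).2 ⟨B, rfl⟩
    have hx1 : x = 1 := by
      rw [← Subgroup.mem_bot, ← hbot]
      exact ⟨hx, hxJ⟩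
    rw [hx1, map_add, map_one, Units.val_one, left_eq_add] at hB
    obtain ⟨C, hC⟩ := (red_eq_zero_iff _).1 hB
    obtain ⟨l, rfl⟩ := Nat.exists_eq_add_of_le hk
    refine ⟨((p : ℤ) ^ l) • C, ?_⟩
    have hp0 : (p : ℤ) ≠ 0 := by exact_mod_cast hp.ne_zero
    refine smul_right_injective _ hp0 ?_
    simp only [hC, smul_smul]
    congr 1
    push_cast
    ring

/-! ### Lifts modulo `4` -/

section Two

variable {n : ℕ} {S : Matrix (Fin n) (Fin n) ℤ → Prop}

/-- The condition on `a` imposed by `(1 + N + 2 a) ^ 2 ≡ 1` modulo `4`. -/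
theorem two_single (hmul : ∀ X Y, S X → S Y → S (X * Y))
    (hone : ∀ B, S (1 + (2 : ℤ) • B) → ∃ C, B = (2 : ℤ) • C)
    {N A : Matrix (Fin n) (Fin n) ℤ} (hN : N * N = 0) (h : S (1 + N + (2 : ℤ) • A)) :
    red n 2 N + red n 2 N * red n 2 A + red n 2 A * red n 2 N = 0 := by
  have h1 := hmul _ _ h h
  have h2 : (1 + N + (2 : ℤ) • A) * (1 + N + (2 : ℤ) • A)
      = 1 + (2 : ℤ) • (N + N * A + A * N + (2 : ℤ) • (A + A * A)) + N * N := by noncomm_ring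
  rw [h2, hN, add_zero] at h1
  obtain ⟨C, hC⟩ := hone _ h1
  rw [← map_mul, ← map_mul, ← map_add, ← map_add]
  refine (red_eq_zero_iff _).2 ⟨C - (A + A * A), ?_⟩
  rw [smul_sub]
  exact eq_sub_of_add_eq hC

/-- The polarization of `two_single`, from the lift of `1 + (N + M)` that is the product of lifts of
`1 + N` and `1 + M`. -/
theorem two_pair (hmul : ∀ X Y, S X → S Y → S (X * Y))
    (hone : ∀ B, S (1 + (2 : ℤ) • B) → ∃ C, B = (2 : ℤ) • C)
    {N A M B : Matrix (Fin n) (Fin n) ℤ} (hN : N * N = 0) (hM : M * M = 0)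
    (hNM : N * M = 0) (hMN : M * N = 0)
    (h : S (1 + N + (2 : ℤ) • A)) (h' : S (1 + M + (2 : ℤ) • B)) :
    red n 2 N * red n 2 B + red n 2 M * red n 2 A + red n 2 B * red n 2 N
      + red n 2 A * red n 2 M + red n 2 M * red n 2 A * red n 2 M
      + red n 2 N * red n 2 B * red n 2 N = 0 := by
  -- the product of the lifts is a lift of `1 + (N + M)`, whose square is again `1` modulo `4`
  have h1 := hmul _ _ h h'
  have h2 : (1 + N + (2 : ℤ) • A) * (1 + M + (2 : ℤ) • B)
      = 1 + (N + M) + (2 : ℤ) • (A + B + N * B + A * M + (2 : ℤ) • (A * B)) + N * M := by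
    noncomm_ring
  rw [h2, hNM, add_zero] at h1
  have h3 := two_single hmul hone (by
    rw [show (N + M) * (N + M) = N * N + N * M + M * N + M * M by noncomm_ring, hN, hM, hNM, hMN]
    simp) h1
  have e1 := two_single hmul hone hN h
  have e2 := two_single hmul hone hM h'
  have hz : red n 2 ((2 : ℤ) • (A * B)) = 0 := (red_eq_zero_iff _).2 ⟨_, rfl⟩
  simp only [map_add, map_mul, hz, add_zero] at h3
  have rN : red n 2 N * red n 2 N = 0 := by rw [← map_mul, hN, map_zero]
  have rM : red n 2 M * red n 2 M = 0 := by rw [← map_mul, hM, map_zero]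
  have rNM : red n 2 N * red n 2 M = 0 := by rw [← map_mul, hNM, map_zero]
  have rMN : red n 2 M * red n 2 N = 0 := by rw [← map_mul, hMN, map_zero]
  generalize red n 2 N = N at *
  generalize red n 2 M = M at *
  generalize red n 2 A = a at *
  generalize red n 2 B = b at *
  -- multiplying the single relations by `M` and `N` removes the terms `N * a * M` and `N * b * M`
  calc _ = ((N + M) + (N + M) * (a + b + N * b + a * M) + (a + b + N * b + a * M) * (N + M))
        - (N + N * a + a * N) - (M + M * b + b * M)
        - (N + N * a + a * N) * M - N * (M + M * b + b * M)
        + (N * M) + (N * M) + a * (N * M) + (N * M) * b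
        - (N * N) * b - (M * N) * b - a * (M * N) - a * (M * M) := by noncomm_ring
    _ = 0 := by rw [h3, e1, e2, rN, rM, rNM, rMN]; simp

/-- The relations among lifts of `1 + E` for the four matrix units `E` with rows `i, j` and columns
`k, l` are inconsistent: the equations for single lifts and for pairs of lifts sum to `1 = 0`. -/
theorem two_contradiction (hmul : ∀ X Y, S X → S Y → S (X * Y))
    (hlift : ∀ N, N * N = 0 → ∃ A, S (1 + N + (2 : ℤ) • A))
    (hone : ∀ B, S (1 + (2 : ℤ) • B) → ∃ C, B = (2 : ℤ) • C)
    (i j k l : Fin n) (hij : i ≠ j) (hik : i ≠ k) (hil : i ≠ l) (hjk : j ≠ k) (hjl : j ≠ l)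
    (hkl : k ≠ l) : False := by
  have sq : ∀ u v w z : Fin n, v ≠ w →
      Matrix.single u v (1 : ℤ) * Matrix.single w z 1 = 0 := fun u v w z h =>
    Matrix.single_mul_single_of_ne _ _ _ _ h _
  obtain ⟨A, hA⟩ := hlift _ (sq i k i k hik.symm)
  obtain ⟨B, hB⟩ := hlift _ (sq i l i l hil.symm)
  obtain ⟨C, hC⟩ := hlift _ (sq j k j k hjk.symm)
  obtain ⟨D, hD⟩ := hlift _ (sq j l j l hjl.symm)
  have eA := two_single hmul hone (sq i k i k hik.symm) hA
  have eAD := two_pair hmul hone (sq i k i k hik.symm) (sq j l j l hjl.symm)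
    (sq i k j l hjk.symm) (sq j l i k hil.symm) hA hD
  have eAB := two_pair hmul hone (sq i k i k hik.symm) (sq i l i l hil.symm)
    (sq i k i l hik.symm) (sq i l i k hil.symm) hA hB
  have eAC := two_pair hmul hone (sq i k i k hik.symm) (sq j k j k hjk.symm)
    (sq i k j k hjk.symm) (sq j k i k hik.symm) hA hC
  have eBC := two_pair hmul hone (sq i l i l hil.symm) (sq j k j k hjk.symm)
    (sq i l j k hjl.symm) (sq j k i l hik.symm) hB hC
  simp only [red_single] at eA eAD eAB eAC eBC
  have ent : ∀ {X : Matrix (Fin n) (Fin n) (ZMod 2)}, X = 0 → ∀ u v, X u v = 0 := by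
    rintro _ rfl u v; rfl
  -- Modulo `2`, the sum of `q1`, `q6`, `q7`, `q8`, `q9` is `1` plus the entries of `A` at `(l, j)`,
  -- `(l, i)`, `(k, j)`, and these vanish by `q5`, `q3`, `q4`.
  have q1 := ent eA i k
  have q3 := ent eA l k
  have q4 := ent eA i j
  have q5 := ent eAD j j
  have q6 := ent eAD j l
  have q7 := ent eAB i l
  have q8 := ent eAC j k
  have q9 := ent eBC j l
  simp only [Matrix.add_apply, single_one_mul_apply, mul_single_one_apply, Matrix.single_apply,
    hil, hjk, hjl, hij.symm, hil.symm, hjk.symm,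
    hkl.symm, if_true, if_false, and_true, and_false, and_self,
    add_zero, zero_add] at q1 q3 q4 q5 q6 q7 q8 q9
  have t : (1 + 1 : ZMod 2) = 0 := rfl
  have : (1 : ZMod 2) = 0 := by
    linear_combination q1 + q6 + q7 + q8 + q9 - q5 - q3 - q4
      - (red n 2 A k k + red n 2 A i i + red n 2 A l l + red n 2 A j j + red n 2 B k l
        + red n 2 C j i) * t
  exact absurd this (by decide)

end Two

/-! ### Lifts modulo `9` -/

section Three

variable {n : ℕ} {S : Matrix (Fin n) (Fin n) ℤ → Prop}

/-- The condition on `a` imposed by `(1 + N + 3 a) ^ 3 ≡ 1` modulo `9`. -/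
theorem three_single (hmul : ∀ X Y, S X → S Y → S (X * Y))
    (hone : ∀ B, S (1 + (3 : ℤ) • B) → ∃ C, B = (3 : ℤ) • C)
    {N A : Matrix (Fin n) (Fin n) ℤ} (hN : N * N = 0) (h : S (1 + N + (3 : ℤ) • A)) :
    red n 3 N + red n 3 N * red n 3 A * red n 3 N = 0 := by
  have h1 := hmul _ _ (hmul _ _ h h) h
  have h2 : (1 + N + (3 : ℤ) • A) * (1 + N + (3 : ℤ) • A) * (1 + N + (3 : ℤ) • A)
      = 1 + (3 : ℤ) • (N + N * A * N + (3 : ℤ) • (A + N * A + A * N + (3 : ℤ) • (A * A)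
        + N * A * A + A * N * A + A * A * N + (3 : ℤ) • (A * A * A)))
        + (3 : ℤ) • (N * N) + N * N * N + (3 : ℤ) • (N * N * A) + (3 : ℤ) • (A * (N * N)) := by
    noncomm_ring
  rw [h2, hN] at h1
  simp only [zero_mul, mul_zero, smul_zero, add_zero] at h1
  obtain ⟨C, hC⟩ := hone _ h1
  rw [← map_mul, ← map_mul, ← map_add]
  have h3 := eq_sub_of_add_eq hC
  rw [← smul_sub] at h3
  exact (red_eq_zero_iff _).2 ⟨_, h3⟩

/-- The lifts of `1 + N` and `1 + M`, for the matrix units `N`, `M` at `(i, j)`, `(i, k)`, are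
inconsistent: `f ↦ f a_f e_i` would be a quadratic form on a plane over `𝔽₃` equal to `-1` at every
nonzero vector, contrary to the parallelogram law. -/
theorem three_contradiction (hmul : ∀ X Y, S X → S Y → S (X * Y))
    (hlift : ∀ N, N * N = 0 → ∃ A, S (1 + N + (3 : ℤ) • A))
    (hone : ∀ B, S (1 + (3 : ℤ) • B) → ∃ C, B = (3 : ℤ) • C)
    (i j k : Fin n) (hij : i ≠ j) (hik : i ≠ k) (hjk : j ≠ k) : False := by
  have sq : ∀ u v w z : Fin n, v ≠ w →
      Matrix.single u v (1 : ℤ) * Matrix.single w z 1 = 0 := fun u v w z h =>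
    Matrix.single_mul_single_of_ne _ _ _ _ h _
  have hN := sq i j i j hij.symm
  have hM := sq i k i k hik.symm
  have hNM := sq i j i k hij.symm
  have hMN := sq i k i j hik.symm
  obtain ⟨A, hA⟩ := hlift _ hN
  obtain ⟨B, hB⟩ := hlift _ hM
  have eN := red_single (m := 3) i j
  have eM := red_single (m := 3) i k
  have eA := three_single hmul hone hN hA
  have eB := three_single hmul hone hM hB
  generalize Matrix.single i j (1 : ℤ) = N at *
  generalize Matrix.single i k (1 : ℤ) = M at *
  have h1 : S (1 + (N + M) + (3 : ℤ) • (A + B + N * B + A * M + (3 : ℤ) • (A * B))) := by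
    have := hmul _ _ hA hB
    rw [show (1 + N + (3 : ℤ) • A) * (1 + M + (3 : ℤ) • B)
      = 1 + (N + M) + (3 : ℤ) • (A + B + N * B + A * M + (3 : ℤ) • (A * B)) + N * M by
        noncomm_ring, hNM, add_zero] at this
    exact this
  -- `1 + N + 2 M` represents the fourth line of the plane spanned by `N` and `M` modulo `3`
  have h2 : S (1 + (N + M + M) + (3 : ℤ) • ((A + B + N * B + A * M + (3 : ℤ) • (A * B)) + B
      + (N + M) * B + (A + B + N * B + A * M + (3 : ℤ) • (A * B)) * M
      + (3 : ℤ) • ((A + B + N * B + A * M + (3 : ℤ) • (A * B)) * B))) := by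
    have := hmul _ _ h1 hB
    generalize A + B + N * B + A * M + (3 : ℤ) • (A * B) = T at *
    rw [show (1 + (N + M) + (3 : ℤ) • T) * (1 + M + (3 : ℤ) • B)
      = 1 + (N + M + M) + (3 : ℤ) • (T + B + (N + M) * B + T * M + (3 : ℤ) • (T * B))
        + N * M + M * M by noncomm_ring, hNM, hM, add_zero, add_zero] at this
    exact this
  have e1 := three_single hmul hone (by
    rw [show (N + M) * (N + M) = N * N + N * M + M * N + M * M by noncomm_ring, hN, hM, hNM, hMN]
    simp) h1
  have e2 := three_single hmul hone (by
    rw [show (N + M + M) * (N + M + M) = N * N + 2 * (N * M) + 2 * (M * N) + 4 * (M * M) by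
      noncomm_ring, hN, hM, hNM, hMN]
    simp) h2
  have hz : ∀ X, red n 3 ((3 : ℤ) • X) = 0 := fun X => (red_eq_zero_iff _).2 ⟨_, rfl⟩
  simp only [map_add, map_mul, hz, add_zero, eN, eM] at eA eB e1 e2
  have ent : ∀ {X : Matrix (Fin n) (Fin n) (ZMod 3)}, X = 0 → ∀ u v, X u v = 0 := by
    rintro _ rfl u v; rfl
  have q1 := ent eA i j
  have q2 := ent eB i k
  have q3 := ent e1 i j
  have q4 := ent e2 i j
  simp only [add_mul, mul_add, Matrix.add_apply, single_one_mul_apply, mul_single_one_apply,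
    Matrix.single_apply, hik, hjk, hij.symm, hik.symm, hjk.symm,
    if_true, if_false, and_false, and_self, add_zero] at q1 q2 q3 q4
  have t : (1 + 1 + 1 : ZMod 3) = 0 := rfl
  have : (1 : ZMod 3) = 0 := by
    linear_combination q4 - q1 - 4 * q2 - 2 * (q3 - q1 - q2) + t
  exact absurd this (by decide)

end Three

/-- For `k ≥ 2`, if `p = 2` and `n ≥ 4`, or `p = 3` and `n ≥ 3`, then
`J(Mat_n(ℤ/p^k))` has no complement in the unit group. -/
theorem no_complement_matrix (p n k : ℕ) (hp : p.Prime) (hk : 2 ≤ k)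
    (h : (p = 2 ∧ 4 ≤ n) ∨ (p = 3 ∧ 3 ≤ n)) :
    ¬ ∃ H : Subgroup (Matrix (Fin n) (Fin n) (ZMod (p ^ k)))ˣ,
        IsComplementOf H (onePlus (Matrix (Fin n) (Fin n) (ZMod (p ^ k))) (Ideal.jacobson ⊥)) := by
  intro hH
  obtain ⟨S, hmul, hlift, hone⟩ := exists_lifts hp hk hH
  rcases h with ⟨rfl, hn⟩ | ⟨rfl, hn⟩
  · exact two_contradiction hmul hlift hone ⟨0, by omega⟩ ⟨1, by omega⟩ ⟨2, by omega⟩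
      ⟨3, by omega⟩ (by simp) (by simp) (by simp) (by simp) (by simp) (by simp)
  · exact three_contradiction hmul hlift hone ⟨0, by omega⟩ ⟨1, by omega⟩ ⟨2, by omega⟩
      (by simp) (by simp) (by simp)
end

section
/- Let k ≥ 2 be an integer and R = Mat_3(Z_{2^k}). Then J(R) has a complement in G(R). -/
/-!
The group `GL₃(𝔽₂) ≅ PSL(2, 7)` has a three-dimensional (Klein) representation over
`ℤ[α]`, where `α² + α + 2 = 0`, that is `α = (-1 + √-7)/2`. Since `X² + X + 2` has a root `a ≡ 0`
modulo `2` in `ℤ/2^k` (`exists_root`), this representation specialises to `ℤ/2^k`, and its image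
is the complement.

The representation is given by matrices `c`, `f`, `w` of orders `7`, `3`, `2`. They arise from the
lattice `(1 - ζ₇)⁻¹ ℤ[ζ₇]` over `ℤ[α]`, with `α = ζ₇ + ζ₇² + ζ₇⁴`: `c` is multiplication by `ζ₇`
and `f` is the Galois automorphism `ζ₇ ↦ ζ₇²`. Together with the involution `w` they satisfy
the usual relations of `PSL(2, 7)` (`rels_mat`). These relations alone imply the Bruhat
decomposition (`Rels.bruhat_of_mem_closure`): every element of `H = ⟨c, f, w⟩` has the form
`cⁱ fʲ` or `cⁱ fʲ w cˡ`.

Reduction modulo `2` has kernel `Jac(Mat₃(ℤ/2^k))` (`mem_jacobson_matrix`). It is injective on `H`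
because, among the `168` words of the Bruhat decomposition, only the empty one is equal to `1`
over `𝔽₂` (`small_cell_ne`, `big_cell_ne`). It maps `H` onto `GL₃(𝔽₂)` because all six elementary
transvections, which generate `GL₃(𝔽₂)`, lie in the big cell (`transvection_big_cell`).
-/

open Pointwise

/-! ### Bruhat decomposition from the relations of `PSL(2, 7)` -/

section Group

variable {G : Type*} [Group G]

/-- The union of the two Bruhat cells `B` and `B w U`, where `U = ⟨c⟩` and `B = ⟨c, f⟩`. -/
def Bruhat (c f w u : G) : Prop :=
  (∃ i j : ℕ, u = c ^ i * f ^ j) ∨ ∃ i j l : ℕ, u = c ^ i * f ^ j * w * c ^ l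

/-- The relations satisfied in `PSL(2, 7)` by the unipotent element `c`, the element `f` of order
`3` of the diagonal torus, and the Weyl involution `w`. -/
structure Rels {M : Type*} [Monoid M] (c f w : M) : Prop where
  c7 : c ^ 7 = 1
  f3 : f ^ 3 = 1
  w2 : w * w = 1
  fc : f * c = c ^ 2 * f
  wf : w * f = f ^ 2 * w
  wcw : w * c * w = c ^ 6 * w * c ^ 6

variable {c f w : G}

lemma Rels.f_cpow (h : Rels c f w) (i : ℕ) : f * c ^ i = c ^ (2 * i) * f := by
  have h1 : SemiconjBy f c (c ^ 2) := h.fc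
  have h2 := (h1.pow_right i).eq
  rwa [← pow_mul] at h2

lemma Rels.cpow_f (h : Rels c f w) (i : ℕ) : c ^ i * f = f * c ^ (4 * i) := by
  rw [h.f_cpow, pow_eq_pow_mod i h.c7, pow_eq_pow_mod (2 * (4 * i)) h.c7]
  congr 2
  omega

lemma Rels.fpow_cpow (h : Rels c f w) (j i : ℕ) : ∃ l, f ^ j * c ^ i = c ^ l * f ^ j := by
  induction j generalizing i with
  | zero => exact ⟨i, by simp⟩
  | succ j ih =>
    obtain ⟨l, hl⟩ := ih (2 * i)
    exact ⟨l, by rw [pow_succ, mul_assoc, h.f_cpow, ← mul_assoc, hl, mul_assoc]⟩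

lemma Rels.cpow_fpow (h : Rels c f w) (j i : ℕ) : ∃ l, c ^ i * f ^ j = f ^ j * c ^ l := by
  induction j generalizing i with
  | zero => exact ⟨i, by simp⟩
  | succ j ih =>
    obtain ⟨l, hl⟩ := ih i
    exact ⟨4 * l, by rw [pow_succ, ← mul_assoc, hl, mul_assoc, h.cpow_f, ← mul_assoc]⟩

lemma Rels.w_fpow (h : Rels c f w) (j : ℕ) : w * f ^ j = f ^ (2 * j) * w := by
  have h1 : SemiconjBy w f (f ^ 2) := h.wf
  have h2 := (h1.pow_right j).eq
  rwa [← pow_mul] at h2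

lemma Bruhat.c_mul {u : G} (hu : Bruhat c f w u) : Bruhat c f w (c * u) := by
  rcases hu with ⟨i, j, rfl⟩ | ⟨i, j, l, rfl⟩
  · exact .inl ⟨i + 1, j, by simp only [pow_succ', mul_assoc]⟩
  · exact .inr ⟨i + 1, j, l, by simp only [pow_succ', mul_assoc]⟩

lemma Bruhat.f_mul (h : Rels c f w) {u : G} (hu : Bruhat c f w u) : Bruhat c f w (f * u) := by
  rcases hu with ⟨i, j, rfl⟩ | ⟨i, j, l, rfl⟩
  · exact .inl ⟨2 * i, j + 1, by rw [pow_succ', ← mul_assoc, h.f_cpow]; simp only [mul_assoc]⟩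
  · refine .inr ⟨2 * i, j + 1, l, ?_⟩
    rw [pow_succ', ← mul_assoc, ← mul_assoc, ← mul_assoc, h.f_cpow]; simp only [mul_assoc]

lemma Bruhat.fpow_mul (h : Rels c f w) {u : G} (hu : Bruhat c f w u) (j : ℕ) :
    Bruhat c f w (f ^ j * u) := by
  induction j with
  | zero => simpa using hu
  | succ j ih => rw [pow_succ', mul_assoc]; exact ih.f_mul h

lemma Bruhat.mul_cpow (h : Rels c f w) {u : G} (hu : Bruhat c f w u) (n : ℕ) :
    Bruhat c f w (u * c ^ n) := by
  rcases hu with ⟨i, j, rfl⟩ | ⟨i, j, l, rfl⟩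
  · obtain ⟨l, hl⟩ := h.fpow_cpow j n
    exact .inl ⟨i + l, j, by rw [mul_assoc, hl, pow_add, mul_assoc]⟩
  · exact .inr ⟨i, j, l + n, by rw [pow_add, ← mul_assoc]⟩

lemma Bruhat.mul_f (h : Rels c f w) {u : G} (hu : Bruhat c f w u) : Bruhat c f w (u * f) := by
  rcases hu with ⟨i, j, rfl⟩ | ⟨i, j, l, rfl⟩
  · exact .inl ⟨i, j + 1, by rw [pow_succ, mul_assoc]⟩
  · refine .inr ⟨i, j + 2, 4 * l, ?_⟩
    rw [mul_assoc, h.cpow_f, ← mul_assoc, mul_assoc _ w f, h.wf, pow_add]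
    simp only [mul_assoc]

/-- Since `f c f⁻¹ = c²` and `w f w = f⁻¹`, the element `w c²ⁿ w` is `f² (w cⁿ w) f`. -/
lemma Rels.bruhat_double (h : Rels c f w) {n : ℕ} (hn : Bruhat c f w (w * c ^ n * w)) :
    Bruhat c f w (w * c ^ (2 * n) * w) := by
  have e : w * c ^ (2 * n) * w = f ^ 2 * (w * c ^ n * w) * f := by
    have h1 : f * c ^ n * f ^ 2 = c ^ (2 * n) := by
      rw [h.f_cpow, mul_assoc, ← pow_succ', h.f3, mul_one]
    calc w * c ^ (2 * n) * w = w * f * c ^ n * (f ^ 2 * w) := by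
          rw [← h1]; simp only [mul_assoc]
      _ = f ^ 2 * w * c ^ n * (w * f) := by rw [h.wf]
      _ = f ^ 2 * (w * c ^ n * w) * f := by simp only [mul_assoc]
  rw [e]
  exact (hn.fpow_mul h 2).mul_f h

/-- Modulo `7` every nonzero exponent is `± 2ˢ`, so doubling reduces the claim to the exponents
`0`, `1` and `6`. -/
lemma Rels.bruhat_wcw (h : Rels c f w) (n : ℕ) : Bruhat c f w (w * c ^ n * w) := by
  have red (m : ℕ) (hm : n % 7 = m % 7) (hb : Bruhat c f w (w * c ^ m * w)) :
      Bruhat c f w (w * c ^ n * w) := by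
    rwa [pow_eq_pow_mod n h.c7, hm, ← pow_eq_pow_mod m h.c7]
  have b1 : Bruhat c f w (w * c ^ 1 * w) :=
    .inr ⟨6, 0, 6, by rw [pow_one, h.wcw, pow_zero, mul_one]⟩
  have b6 : Bruhat c f w (w * c ^ 6 * w) := by
    -- the inverse of the relation `w c w = c⁻¹ w c⁻¹`
    refine .inr ⟨1, 0, 1, ?_⟩
    have hc : c ^ 6 = c⁻¹ := eq_inv_of_mul_eq_one_left (by rw [← pow_succ, h.c7])
    have hw : w⁻¹ = w := inv_eq_of_mul_eq_one_left h.w2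
    have := congrArg (·⁻¹) h.wcw
    simpa [hc, hw, mul_assoc] using this
  have h7 : n % 7 = 0 ∨ n % 7 = 1 ∨ n % 7 = 2 ∨ n % 7 = 3 ∨ n % 7 = 4 ∨ n % 7 = 5 ∨
      n % 7 = 6 := by omega
  rcases h7 with hn | hn | hn | hn | hn | hn | hn
  · exact red 0 hn (.inl ⟨0, 0, by simp [h.w2]⟩)
  · exact red 1 hn b1
  · exact red 2 hn (h.bruhat_double b1)
  · exact red _ hn (h.bruhat_double (h.bruhat_double b6))
  · exact red _ hn (h.bruhat_double (h.bruhat_double b1))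
  · exact red _ hn (h.bruhat_double b6)
  · exact red 6 hn b6

lemma Bruhat.w_mul (h : Rels c f w) {u : G} (hu : Bruhat c f w u) : Bruhat c f w (w * u) := by
  rcases hu with ⟨i, j, rfl⟩ | ⟨i, j, l, rfl⟩
  · obtain ⟨l, hl⟩ := h.cpow_fpow j i
    refine .inr ⟨0, 2 * j, l, ?_⟩
    rw [hl, ← mul_assoc, h.w_fpow, pow_zero, one_mul]
  · obtain ⟨m, hm⟩ := h.cpow_fpow j i
    have e : w * (c ^ i * f ^ j * w * c ^ l) = f ^ (2 * j) * (w * c ^ m * w) * c ^ l := by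
      rw [hm]
      simp only [← mul_assoc]
      rw [h.w_fpow]
    rw [e]
    exact ((h.bruhat_wcw m).fpow_mul h _).mul_cpow h l

/-- Bruhat decomposition of the group generated by `c`, `f`, `w`. -/
lemma Rels.bruhat_of_mem_closure (h : Rels c f w) {u : G}
    (hu : u ∈ Subgroup.closure {c, f, w}) : Bruhat c f w u := by
  induction hu using Subgroup.closure_induction_left with
  | one => exact .inl ⟨0, 0, by simp⟩
  | mul_left x hx y hy ih =>
    rcases hx with rfl | rfl | rfl
    exacts [ih.c_mul, ih.f_mul h, ih.w_mul h]
  | inv_mul_cancel x hx y hy ih =>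
    rcases hx with rfl | rfl | rfl
    · have hc : x ^ 6 = x⁻¹ := eq_inv_of_mul_eq_one_left (by rw [← pow_succ, h.c7])
      rw [← hc]
      simp only [pow_succ, pow_zero, one_mul, mul_assoc]
      exact ih.c_mul.c_mul.c_mul.c_mul.c_mul.c_mul
    · have hf : x ^ 2 = x⁻¹ := eq_inv_of_mul_eq_one_left (by rw [← pow_succ, h.f3])
      rw [← hf]
      exact ih.fpow_mul h 2
    · rw [inv_eq_of_mul_eq_one_left h.w2]
      exact ih.w_mul h

end Group

/-! ### The Klein representation -/

section Matrices

variable {A : Type*} [CommRing A]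

/-- An element of order `7`, the companion matrix of `X³ - aX² - (a + 1)X - 1`. -/
def matC (a : A) : Matrix (Fin 3) (Fin 3) A := !![0, 0, 1; 1, 0, 1 + a; 0, 1, a]

/-- An element of order `3` normalising `⟨matC a⟩`. -/
def matF (a : A) : Matrix (Fin 3) (Fin 3) A := !![0, -1, 0; -1 - a, -a, 1; 1, 1, a]

/-- An involution inverting `matF a` under conjugation. -/
def matW (a : A) : Matrix (Fin 3) (Fin 3) A := !![-1, 0, -1 - a; 0, -1, -a; 0, 0, 1]

lemma rels_mat {a : A} (ha : a * a + a + 2 = 0) : Rels (matC a) (matF a) (matW a) := by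
  have c2 : matC a ^ 2 = !![0, 1, a; 0, 1 + a, -1; 1, a, -1] := by
    rw [pow_two]; ext i j
    fin_cases i <;> fin_cases j <;> simp [matC, Matrix.mul_apply, Fin.sum_univ_three] <;> grind
  have c3 : matC a ^ 3 = !![1, a, -1; 1 + a, -1, -1; a, -1, -1 - a] := by
    rw [pow_succ, c2]; ext i j
    fin_cases i <;> fin_cases j <;> simp [matC, Matrix.mul_apply, Fin.sum_univ_three] <;> grind
  have c6 : matC a ^ 6 = !![-1 - a, 1, 0; -a, 0, 1; 1, 0, 0] := by
    rw [show 6 = 3 + 3 from rfl, pow_add, c3]; ext i j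
    fin_cases i <;> fin_cases j <;> simp [Matrix.mul_apply, Fin.sum_univ_three] <;> grind
  have f2 : matF a ^ 2 = !![1 + a, a, -1; -1, 0, 0; -1, -1, -1 - a] := by
    rw [pow_two]; ext i j
    fin_cases i <;> fin_cases j <;> simp [matF, Matrix.mul_apply, Fin.sum_univ_three] <;> grind
  constructor
  · rw [pow_succ, c6]; ext i j
    fin_cases i <;> fin_cases j <;> simp [matC, Matrix.mul_apply, Fin.sum_univ_three]
  · rw [pow_succ, f2]; ext i j
    fin_cases i <;> fin_cases j <;> simp [matF, Matrix.mul_apply, Fin.sum_univ_three] <;> grind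
  · ext i j
    fin_cases i <;> fin_cases j <;> simp [matW, Matrix.mul_apply, Fin.sum_univ_three] <;> ring
  · rw [c2]; ext i j
    fin_cases i <;> fin_cases j <;> simp [matC, matF, Matrix.mul_apply, Fin.sum_univ_three] <;>
      grind
  · rw [f2]; ext i j
    fin_cases i <;> fin_cases j <;> simp [matW, matF, Matrix.mul_apply, Fin.sum_univ_three] <;>
      grind
  · rw [c6]; ext i j
    fin_cases i <;> fin_cases j <;> simp [matC, matW, Matrix.mul_apply, Fin.sum_univ_three] <;>
      grind

lemma map_mats {B : Type*} [CommRing B] (g : A →+* B) (a : A) :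
    g.mapMatrix (matC a) = matC (g a) ∧ g.mapMatrix (matF a) = matF (g a) ∧
      g.mapMatrix (matW a) = matW (g a) := by
  refine ⟨?_, ?_, ?_⟩ <;> ext i j <;> fin_cases i <;> fin_cases j <;> simp [matC, matF, matW]

end Matrices

/-! ### The reduction modulo `2` of the representation -/

lemma small_cell_ne : ∀ (i : Fin 7) (j : Fin 3),
    matC (0 : ZMod 2) ^ (i : ℕ) * matF (0 : ZMod 2) ^ (j : ℕ) = 1 → i = 0 ∧ j = 0 := by
  decide +kernel

lemma big_cell_ne : ∀ (i : Fin 7) (j : Fin 3) (l : Fin 7),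
    matC (0 : ZMod 2) ^ (i : ℕ) * matF (0 : ZMod 2) ^ (j : ℕ) * matW (0 : ZMod 2) *
      matC (0 : ZMod 2) ^ (l : ℕ) ≠ 1 := by
  decide +kernel

/-- Transvections are involutions, hence lie outside the subgroup `⟨c, f⟩` of order `21`. -/
lemma transvection_big_cell : ∀ p q : Fin 3, p ≠ q → ∃ (i : Fin 7) (j : Fin 3) (l : Fin 7),
    matC (0 : ZMod 2) ^ (i : ℕ) * matF (0 : ZMod 2) ^ (j : ℕ) * matW (0 : ZMod 2) *
      matC (0 : ZMod 2) ^ (l : ℕ) = Matrix.transvection p q 1 := by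
  unfold Matrix.transvection
  decide +kernel

/-! ### Lifting to `ℤ/2^k` and the Jacobson radical -/

/-- Hensel lifting: `X² + X + 2` has a root congruent to `0` modulo `2` in every `ℤ/2^k`. -/
lemma exists_root (k : ℕ) : ∃ b : ℤ, (2 : ℤ) ^ (k + 1) ∣ (2 * b) * (2 * b) + 2 * b + 2 := by
  induction k with
  | zero => exact ⟨0, by norm_num⟩
  | succ k ih =>
    obtain ⟨b, t, ht⟩ := ih
    -- Newton step: the root `2b` is corrected by `2 ^ (k + 1) * t`
    refine ⟨b + 2 ^ k * t, t * (2 * b + 1) + 2 ^ k * t * t, ?_⟩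
    rw [pow_succ] at ht
    rw [pow_succ, pow_succ]
    linear_combination ht

lemma entry_mem_jacobson {k : ℕ} (hk : k ≠ 0) (x : ZMod (2 ^ k)) :
    x ∈ Ideal.jacobson (⊥ : Ideal (ZMod (2 ^ k))) ↔
      ZMod.castHom (dvd_pow_self 2 hk) (ZMod 2) x = 0 := by
  constructor
  · intro hx
    have hmax : (RingHom.ker (ZMod.castHom (dvd_pow_self 2 hk) (ZMod 2))).IsMaximal :=
      RingHom.ker_isMaximal_of_surjective _ (ZMod.castHom_surjective _)
    exact (Ideal.mem_sInf.mp hx) ⟨bot_le, hmax⟩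
  · intro hx
    have : NeZero (2 ^ k) := ⟨by positivity⟩
    have h2 : 2 ∣ x.val := by
      rw [← ZMod.natCast_eq_zero_iff]
      rwa [ZMod.castHom_apply, ZMod.cast_eq_val] at hx
    obtain ⟨m, hm⟩ := h2
    -- `x` is even, hence nilpotent
    refine Ideal.radical_le_jacobson ⟨k, ?_⟩
    rw [Ideal.mem_bot, ← ZMod.natCast_zmod_val x, hm]
    rw [Nat.cast_mul, mul_pow, ← Nat.cast_pow, ZMod.natCast_self, zero_mul]

/-- `Jac(Mat₃(ℤ/2^k))` is the kernel of reduction modulo `2`. -/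
lemma mem_jacobson_matrix {k : ℕ} (hk : k ≠ 0) (x : Matrix (Fin 3) (Fin 3) (ZMod (2 ^ k))) :
    x ∈ Ideal.jacobson (⊥ : Ideal (Matrix (Fin 3) (Fin 3) (ZMod (2 ^ k)))) ↔
      (ZMod.castHom (dvd_pow_self 2 hk) (ZMod 2)).mapMatrix x = 0 := by
  have h1 : x ∈ Ideal.jacobson (⊥ : Ideal (Matrix (Fin 3) (Fin 3) (ZMod (2 ^ k)))) ↔
      ∀ i j, x i j ∈ Ideal.jacobson (⊥ : Ideal (ZMod (2 ^ k))) := by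
    have h := congrArg TwoSidedIdeal.asIdeal
      (TwoSidedIdeal.matrix_jacobson_bot (R := ZMod (2 ^ k)) (n := Fin 3))
    rw [TwoSidedIdeal.asIdeal_matrix, TwoSidedIdeal.asIdeal_jacobson,
      TwoSidedIdeal.asIdeal_jacobson, TwoSidedIdeal.bot_asIdeal, TwoSidedIdeal.bot_asIdeal] at h
    rw [← h]
    rfl
  rw [h1, ← Matrix.ext_iff]
  simp only [entry_mem_jacobson hk]
  rfl

/-- For `k ≥ 2`, `J(Mat_3(ℤ/2^k))` has a complement in the unit group. -/
theorem complement_matrix_three_two (k : ℕ) (hk : 2 ≤ k) :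
    ∃ H : Subgroup (Matrix (Fin 3) (Fin 3) (ZMod (2 ^ k)))ˣ,
        IsComplementOf H (onePlus (Matrix (Fin 3) (Fin 3) (ZMod (2 ^ k))) (Ideal.jacobson ⊥)) := by
  have hk0 : k ≠ 0 := by omega
  set φ := (ZMod.castHom (dvd_pow_self 2 hk0) (ZMod 2)).mapMatrix (m := Fin 3) with hφ
  obtain ⟨a, ha, ha0⟩ : ∃ a : ZMod (2 ^ k), a * a + a + 2 = 0 ∧
      ZMod.castHom (dvd_pow_self 2 hk0) (ZMod 2) a = 0 := by
    obtain ⟨b, hb⟩ := exists_root (k - 1)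
    rw [Nat.sub_add_cancel (by omega)] at hb
    refine ⟨((2 * b : ℤ) : ZMod (2 ^ k)), ?_, ?_⟩
    · have := (ZMod.intCast_zmod_eq_zero_iff_dvd (2 * b * (2 * b) + 2 * b + 2) (2 ^ k)).mpr
        (by exact_mod_cast hb)
      simpa using this
    · rw [map_intCast, ZMod.intCast_zmod_eq_zero_iff_dvd]
      exact ⟨b, by simp⟩
  have hR := rels_mat ha
  have hR2 : Rels (matC (0 : ZMod 2)) (matF 0) (matW 0) := rels_mat (by decide)
  let c := Units.ofPowEqOne (matC a) 7 hR.c7 (by norm_num)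
  let f := Units.ofPowEqOne (matF a) 3 hR.f3 (by norm_num)
  let w : (Matrix (Fin 3) (Fin 3) (ZMod (2 ^ k)))ˣ := ⟨matW a, matW a, hR.w2, hR.w2⟩
  have hU : Rels c f w :=
    ⟨Units.ext hR.c7, Units.ext hR.f3, Units.ext hR.w2, Units.ext hR.fc, Units.ext hR.wf,
      Units.ext hR.wcw⟩
  obtain ⟨hC, hF, hW⟩ := map_mats (ZMod.castHom (dvd_pow_self 2 hk0) (ZMod 2)) a
  rw [ha0] at hC hF hW
  have hc : φ (c : Matrix _ _ _) = matC 0 := hC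
  have hf : φ (f : Matrix _ _ _) = matF 0 := hF
  have hw : φ (w : Matrix _ _ _) = matW 0 := hW
  have hJ (u : (Matrix (Fin 3) (Fin 3) (ZMod (2 ^ k)))ˣ) :
      u ∈ onePlus (Matrix (Fin 3) (Fin 3) (ZMod (2 ^ k))) (Ideal.jacobson ⊥) ↔
        φ (u : Matrix _ _ _) = 1 := by
    rw [← sub_eq_zero, ← map_one φ, ← map_sub]
    exact mem_jacobson_matrix hk0 _
  have mc : c ∈ Subgroup.closure {c, f, w} := Subgroup.subset_closure (by simp)
  have mf : f ∈ Subgroup.closure {c, f, w} := Subgroup.subset_closure (by simp)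
  have mw : w ∈ Subgroup.closure {c, f, w} := Subgroup.subset_closure (by simp)
  refine ⟨Subgroup.closure {c, f, w}, ?_, ?_⟩
  · rw [eq_bot_iff]
    rintro u ⟨hu, hu1⟩
    have hu1 : φ (u : Matrix _ _ _) = 1 := (hJ u).mp hu1
    rcases hU.bruhat_of_mem_closure hu with ⟨i, j, rfl⟩ | ⟨i, j, l, rfl⟩
    · simp only [Units.val_mul, Units.val_pow_eq_pow_val, map_mul, map_pow, hc, hf] at hu1
      rw [pow_eq_pow_mod i hR2.c7, pow_eq_pow_mod j hR2.f3] at hu1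
      obtain ⟨hi, hj⟩ := small_cell_ne ⟨i % 7, Nat.mod_lt _ (by norm_num)⟩
        ⟨j % 3, Nat.mod_lt _ (by norm_num)⟩ hu1
      have hi : i % 7 = 0 := congrArg Fin.val hi
      have hj : j % 3 = 0 := congrArg Fin.val hj
      rw [pow_eq_pow_mod i hU.c7, pow_eq_pow_mod j hU.f3, hi, hj]
      simp
    · simp only [Units.val_mul, Units.val_pow_eq_pow_val, map_mul, map_pow, hc, hf, hw] at hu1
      rw [pow_eq_pow_mod i hR2.c7, pow_eq_pow_mod j hR2.f3, pow_eq_pow_mod l hR2.c7] at hu1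
      exact (big_cell_ne ⟨i % 7, Nat.mod_lt _ (by norm_num)⟩
        ⟨j % 3, Nat.mod_lt _ (by norm_num)⟩ ⟨l % 7, Nat.mod_lt _ (by norm_num)⟩ hu1).elim
  · have surj (M : Matrix (Fin 3) (Fin 3) (ZMod 2)) (hM : M.det ≠ 0) :
        ∃ h ∈ Subgroup.closure {c, f, w}, φ (h : Matrix _ _ _) = M := by
      have two (x : ZMod 2) : x = 0 ∨ x = 1 := by revert x; decide
      refine Matrix.diagonal_transvection_induction_of_det_ne_zero
        (fun M => ∃ h ∈ Subgroup.closure {c, f, w}, φ (h : Matrix _ _ _) = M) M hM ?_ ?_ ?_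
      · -- over `𝔽₂` the only invertible diagonal matrix is `1`
        intro D hD
        refine ⟨1, one_mem _, ?_⟩
        rw [Matrix.det_diagonal, Finset.prod_ne_zero_iff] at hD
        have : D = 1 := funext fun i => (two (D i)).resolve_left (hD i (Finset.mem_univ i))
        rw [this, Units.val_one, map_one, Matrix.diagonal_one']
      · rintro ⟨p, q, hpq, x⟩
        rcases two x with rfl | rfl
        · exact ⟨1, one_mem _, by simp [Matrix.TransvectionStruct.toMatrix]⟩
        · obtain ⟨i, j, l, h⟩ := transvection_big_cell p q hpq
          refine ⟨c ^ (i : ℕ) * f ^ (j : ℕ) * w * c ^ (l : ℕ),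
            mul_mem (mul_mem (mul_mem (pow_mem mc _) (pow_mem mf _)) mw) (pow_mem mc _), ?_⟩
          simp only [Units.val_mul, Units.val_pow_eq_pow_val, map_mul, map_pow, hc, hf, hw]
          exact h
      · rintro _ _ - - ⟨g, hg, rfl⟩ ⟨h, hh, rfl⟩
        exact ⟨g * h, mul_mem hg hh, by rw [Units.val_mul, map_mul]⟩
    rw [Set.eq_univ_iff_forall]
    intro u
    have hdet : (φ (u : Matrix _ _ _)).det ≠ 0 :=
      ((Matrix.isUnit_iff_isUnit_det _).mp (u.isUnit.map φ)).ne_zero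
    obtain ⟨h, hh, e⟩ := surj _ hdet
    refine ⟨h, hh, h⁻¹ * u, ?_, mul_inv_cancel_left h u⟩
    refine (hJ _).mpr ?_
    rw [Units.val_mul, map_mul, ← e, ← map_mul, Units.inv_mul, map_one]
end

section
/- There is no group homomorphism θ : GL_4(Z_2) → GL_4(Z_4) such that the composition of θ with the group homomorphism GL_4(Z_4) → GL_4(Z_2) induced by reduction modulo 2 is the identity on GL_4(Z_2). -/
/-!
Already the Klein four-group `⟨a, b⟩` with `a = [[1, 1], [0, 1]]` and `b = [[1, C], [0, 1]]`
(in `2 × 2` blocks), where `C = [[0, 1], [1, 1]]` has trace `1`, does not lift to commuting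
involutions over `ℤ/4`.

Suppose that `A` and `B` are commuting lifts with `A² = B² = 1`, with diagonal blocks
`1 + 2X, 1 + 2W` and `1 + 2X', 1 + 2W'` respectively. Comparing upper right blocks modulo 4 (the
lower left blocks, which are even, do not enter these) gives, modulo 2,

* `1 + X + W = 0` from `A² = 1`;
* `C + X'C + CW' = 0` from `B² = 1`;
* `XC + W' = X' + CW` from `AB = BA`.

Multiply the first relation by `C` and the second by `C⁻¹` on the left, add all three and take
traces. As `tr (CX) = tr (XC)` and `tr (C⁻¹X'C) = tr X'`, every unknown cancels, leaving
`tr C = 0`, which is false.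
-/

/-- The involution `[[1, 1], [0, 1]]` in `2 × 2` blocks. -/
def kleinA : (Matrix (Fin 4) (Fin 4) (ZMod 2))ˣ where
  val := !![1, 0, 1, 0; 0, 1, 0, 1; 0, 0, 1, 0; 0, 0, 0, 1]
  inv := !![1, 0, 1, 0; 0, 1, 0, 1; 0, 0, 1, 0; 0, 0, 0, 1]
  val_inv := by decide
  inv_val := by decide

/-- The involution `[[1, C], [0, 1]]` in `2 × 2` blocks, where `C = [[0, 1], [1, 1]]`. -/
def kleinB : (Matrix (Fin 4) (Fin 4) (ZMod 2))ˣ where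
  val := !![1, 0, 0, 1; 0, 1, 1, 1; 0, 0, 1, 0; 0, 0, 0, 1]
  inv := !![1, 0, 0, 1; 0, 1, 1, 1; 0, 0, 1, 0; 0, 0, 0, 1]
  val_inv := by decide
  inv_val := by decide

lemma exists_eq_two_mul_of_cast_eq_zero (u : ZMod 4)
    (h : ZMod.castHom (by norm_num : (2 : ℕ) ∣ 4) (ZMod 2) u = 0) : ∃ x, u = 2 * x := by
  revert u; decide

lemma exists_eq_one_add_two_mul_of_cast_eq_one (u : ZMod 4)
    (h : ZMod.castHom (by norm_num : (2 : ℕ) ∣ 4) (ZMod 2) u = 1) : ∃ x, u = 1 + 2 * x := by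
  revert u; decide

/-- `kleinA` and `kleinB` have no commuting involutive lifts over `ℤ/4`. -/
lemma no_commuting_involutive_lifts (A B : Matrix (Fin 4) (Fin 4) (ZMod 4))
    (hA : A.map (ZMod.castHom (by norm_num : (2 : ℕ) ∣ 4) (ZMod 2)) = kleinA.val)
    (hB : B.map (ZMod.castHom (by norm_num : (2 : ℕ) ∣ 4) (ZMod 2)) = kleinB.val)
    (hAA : A * A = 1) (hBB : B * B = 1) (hAB : A * B = B * A) : False := by
  have zA (i j) (h : kleinA.val i j = 0) : ∃ x, A i j = 2 * x :=
    exists_eq_two_mul_of_cast_eq_zero _ ((congrFun₂ hA i j).trans h)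
  have oA (i j) (h : kleinA.val i j = 1) : ∃ x, A i j = 1 + 2 * x :=
    exists_eq_one_add_two_mul_of_cast_eq_one _ ((congrFun₂ hA i j).trans h)
  have zB (i j) (h : kleinB.val i j = 0) : ∃ x, B i j = 2 * x :=
    exists_eq_two_mul_of_cast_eq_zero _ ((congrFun₂ hB i j).trans h)
  have oB (i j) (h : kleinB.val i j = 1) : ∃ x, B i j = 1 + 2 * x :=
    exists_eq_one_add_two_mul_of_cast_eq_one _ ((congrFun₂ hB i j).trans h)
  obtain ⟨a00, ha00⟩ := oA 0 0 (by decide)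
  obtain ⟨a01, ha01⟩ := zA 0 1 (by decide)
  obtain ⟨a02, ha02⟩ := oA 0 2 (by decide)
  obtain ⟨a03, ha03⟩ := zA 0 3 (by decide)
  obtain ⟨a10, ha10⟩ := zA 1 0 (by decide)
  obtain ⟨a11, ha11⟩ := oA 1 1 (by decide)
  obtain ⟨a12, ha12⟩ := zA 1 2 (by decide)
  obtain ⟨a13, ha13⟩ := oA 1 3 (by decide)
  obtain ⟨a22, ha22⟩ := oA 2 2 (by decide)
  obtain ⟨a23, ha23⟩ := zA 2 3 (by decide)
  obtain ⟨a32, ha32⟩ := zA 3 2 (by decide)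
  obtain ⟨a33, ha33⟩ := oA 3 3 (by decide)
  obtain ⟨b00, hb00⟩ := oB 0 0 (by decide)
  obtain ⟨b01, hb01⟩ := zB 0 1 (by decide)
  obtain ⟨b02, hb02⟩ := zB 0 2 (by decide)
  obtain ⟨b03, hb03⟩ := oB 0 3 (by decide)
  obtain ⟨b10, hb10⟩ := zB 1 0 (by decide)
  obtain ⟨b11, hb11⟩ := oB 1 1 (by decide)
  obtain ⟨b12, hb12⟩ := oB 1 2 (by decide)
  obtain ⟨b13, hb13⟩ := oB 1 3 (by decide)
  obtain ⟨b22, hb22⟩ := oB 2 2 (by decide)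
  obtain ⟨b23, hb23⟩ := zB 2 3 (by decide)
  obtain ⟨b32, hb32⟩ := zB 3 2 (by decide)
  obtain ⟨b33, hb33⟩ := oB 3 3 (by decide)
  have eAA (i j) := congrFun₂ hAA i j
  have eBB (i j) := congrFun₂ hBB i j
  have eAB (i j) := congrFun₂ hAB i j
  simp only [Matrix.mul_apply, Fin.sum_univ_four] at eAA eBB eAB
  have p03 := eAA 0 3
  have p12 := eAA 1 2
  have p13 := eAA 1 3
  have q02 := eBB 0 2
  have q03 := eBB 0 3
  have q12 := eBB 1 2
  have r02 := eAB 0 2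
  have r13 := eAB 1 3
  rw [Matrix.one_apply_ne (by decide)] at p03 p12 p13 q02 q03 q12
  simp only [ha00, ha01, ha02, ha03, ha10, ha11, ha12, ha13, ha22, ha23, ha32, ha33, hb00, hb01,
    hb02, hb03, hb10, hb11, hb12, hb13, hb22, hb23, hb32, hb33] at p03 p12 p13 q02 q03 q12 r02 r13
  have h4 : (4 : ZMod 4) = 0 := by decide
  have h2 : (2 : ZMod 4) = 0 := by
    -- `p03 + p12 + p13` is `tr (C * ·)` of the upper right block of `A * A`, and
    -- `q02 + q12 + q03` is `tr (C⁻¹ * ·)` of that of `B * B`, where `C⁻¹ = [[1, 1], [1, 0]]`.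
    linear_combination (norm := ring_nf) p03 + p12 + p13 + q02 + q12 + q03 + r02 + r13
    -- Only multiples of `4` remain.
    simp only [h4, mul_zero, add_zero, sub_zero, neg_zero]
  exact absurd h2 (by decide)

/-- There is no group homomorphism `θ : GL₄(ℤ/2) → GL₄(ℤ/4)` such that
composing `θ` with the reduction-mod-2 map `GL₄(ℤ/4) → GL₄(ℤ/2)` is the identity. -/
theorem no_section_GL4_Z4 :
    ¬ ∃ θ : (Matrix (Fin 4) (Fin 4) (ZMod 2))ˣ →* (Matrix (Fin 4) (Fin 4) (ZMod 4))ˣ,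
      ∀ g, Units.map ((ZMod.castHom (by norm_num : (2 : ℕ) ∣ 4)
          (ZMod 2)).mapMatrix (m := Fin 4)).toMonoidHom (θ g) = g := by
  rintro ⟨θ, hθ⟩
  have hAA : kleinA * kleinA = 1 := Units.ext (by decide)
  have hBB : kleinB * kleinB = 1 := Units.ext (by decide)
  have hAB : kleinA * kleinB = kleinB * kleinA := Units.ext (by decide)
  refine no_commuting_involutive_lifts (θ kleinA).val (θ kleinB).val
    (congrArg Units.val (hθ kleinA)) (congrArg Units.val (hθ kleinB)) ?_ ?_ ?_
  · rw [← Units.val_mul, ← map_mul, hAA, map_one, Units.val_one]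
  · rw [← Units.val_mul, ← map_mul, hBB, map_one, Units.val_one]
  · rw [← Units.val_mul, ← Units.val_mul, ← map_mul, ← map_mul, hAB]
end

section
/- The group GL_3(Z_2) has presentation ⟨α, β ∣ α² = β³ = (αβ)⁷ = (αβαβ⁻¹)⁴ = 1⟩; that is, the quotient of the free group on two generators x, y by the normal closure of {x², y³, (xy)⁷, (xyxy⁻¹)⁴} is isomorphic to GL_3(Z_2), via an isomorphism sending x to the elementary matrix α with rows (1,1,0),(0,1,0),(0,0,1) and y to the permutation matrix β with rows (0,0,1),(1,0,0),(0,1,0). -/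
/-!
Put `a = xy`. The relations become `x² = a⁷ = (xa)³ = (xa³)⁴ = 1`, the pattern of `PSL₂(𝔽₇)`
acting on the projective line over `𝔽₇`, with `a` the translation `z ↦ z + 1` and `x` the
involution `z ↦ -1/z`. From these relations alone, the word `b = a⁻³xa²xa⁻³x` satisfies
`ba = a²b`, `b³ = 1` and `xbx = b⁻¹`, and every `x aᵏ x` with `7 ∤ k` lies in `B x U`, where
`U = ⟨a⟩` and `B = ⟨a, b⟩`. Therefore any group generated by such `x` and `a` is `B ∪ B x U`:
the map `bruhatForm` from a set of `21 + 147 = 168` elements is onto it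
(`BruhatRels.bruhatForm_surjective`).

Conversely, in any group with such elements these 168 forms are distinct as soon as `x` and `a`
do not commute (`BruhatRels.bruhatForm_injective`): `B` lies in the normalizer of `⟨a⟩` while `x`
does not, which separates the two cells, and inside `B` the conjugation action on `⟨a⟩`
determines the power of `b`.

The matrices satisfy the relations and `|GL₃(ℤ/2)| = 168`, so the forms enumerate `GL₃(ℤ/2)`
bijectively. As they also exhaust the presented group, the canonical homomorphism is bijective.
-/

/-- The relators `x², y³, (xy)⁷, (xyxy⁻¹)⁴` in the free group on two generators. -/
def gl3Rels : Set (FreeGroup (Fin 2)) :=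
  {FreeGroup.of 0 ^ 2, FreeGroup.of 1 ^ 3, (FreeGroup.of 0 * FreeGroup.of 1) ^ 7,
    (FreeGroup.of 0 * FreeGroup.of 1 * FreeGroup.of 0 * (FreeGroup.of 1)⁻¹) ^ 4}

/-! ### Consequences of the relations -/

/-- The candidate generator of the torus of a Borel subgroup normalizing `⟨a⟩`. When `x` is
`z ↦ -1/z` and `a` is `z ↦ z + 1` on the projective line over `𝔽₇`, this is a dilation. -/
def torusElt {G : Type*} [Group G] (x a : G) : G :=
  a⁻¹ ^ 3 * x * a ^ 2 * x * a⁻¹ ^ 3 * x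

/-- The defining relations rewritten in the generators `x` and `a = xy`. -/
structure BruhatRels {G : Type*} [Group G] (x a : G) : Prop where
  x_sq : x * x = 1
  a_pow : a ^ 7 = 1
  braid : x * a * x = a⁻¹ * x * a⁻¹
  quartic : (x * a ^ 3) ^ 4 = 1

theorem bruhatRels_of_rels {G : Type*} [Group G] {x y : G} (hx : x ^ 2 = 1) (hy : y ^ 3 = 1)
    (h7 : (x * y) ^ 7 = 1) (h4 : (x * y * x * y⁻¹) ^ 4 = 1) : BruhatRels x (x * y) := by
  have hxx : x * x = 1 := by rw [← pow_two, hx]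
  have hxi : x⁻¹ = x := inv_eq_of_mul_eq_one_left hxx
  have hyi : y⁻¹ * y⁻¹ = y := by
    calc y⁻¹ * y⁻¹ = (y ^ 3)⁻¹ * y := by group
      _ = y := by rw [hy]; group
  have hbr : x * (x * y) * x = (x * y)⁻¹ * x * (x * y)⁻¹ := by
    calc x * (x * y) * x = (x * x) * y * x := by group
      _ = y⁻¹ * y⁻¹ * x := by rw [hxx, hyi, one_mul]
      _ = y⁻¹ * x⁻¹ * x * (y⁻¹ * x) := by group
      _ = (x * y)⁻¹ * x * (x * y)⁻¹ := by rw [mul_inv_rev, hxi]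
  refine ⟨hxx, h7, hbr, ?_⟩
  have h5 : x * y * x * y⁻¹ = (x * y) ^ 2 * (x * (x * y) ^ 3) * ((x * y) ^ 2)⁻¹ := by
    calc x * y * x * y⁻¹ = (x * y) * (x * (x * y) * x⁻¹)⁻¹ * (x * x) := by group
      _ = (x * y) * (x * (x * y) * x)⁻¹ := by rw [hxx, hxi, mul_one]
      _ = (x * y) * ((x * y)⁻¹ * x * (x * y)⁻¹)⁻¹ := by rw [hbr]
      _ = (x * y) ^ 2 * x⁻¹ * (x * y) := by simp [pow_succ, mul_assoc]
      _ = (x * y) ^ 2 * x * (x * y) := by rw [hxi]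
      _ = _ := by simp [pow_succ, mul_assoc]
  rw [h5, conj_pow] at h4
  simpa using h4

namespace BruhatRels

variable {G : Type*} [Group G] {x a : G}

theorem x_inv (h : BruhatRels x a) : x⁻¹ = x := inv_eq_of_mul_eq_one_left h.x_sq

theorem a_inv_pow (h : BruhatRels x a) (k : ℕ) (hk : k ≤ 7) : a⁻¹ ^ k = a ^ (7 - k) := by
  rw [inv_pow, inv_eq_iff_mul_eq_one, ← pow_add, Nat.add_sub_cancel' hk, h.a_pow]

theorem conj_two (h : BruhatRels x a) :
    x * a ^ 2 * x = a ^ 3 * torusElt x a * x * a ^ 3 := by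
  calc x * a ^ 2 * x = a ^ 3 * (a⁻¹ ^ 3 * x * a ^ 2 * x * a⁻¹ ^ 3 * 1) * a ^ 3 := by group
    _ = _ := by rw [← h.x_sq, torusElt]; group

theorem torus_conj_x (h : BruhatRels x a) : x * torusElt x a * x = (torusElt x a)⁻¹ := by
  have e : x * a ^ 2 * x = a⁻¹ * x * a⁻¹ ^ 2 * x * a⁻¹ := by
    calc x * a ^ 2 * x = x * a * 1 * a * x := by simp [pow_succ, mul_assoc]
      _ = (x * a * x) * (x * a * x) := by rw [← h.x_sq]; group
      _ = _ := by rw [h.braid]; group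
  have e' : torusElt x a = a⁻¹ ^ 4 * x * a⁻¹ ^ 2 * x * a⁻¹ ^ 4 * x := by
    calc torusElt x a = a⁻¹ ^ 3 * (x * a ^ 2 * x) * a⁻¹ ^ 3 * x := by rw [torusElt]; group
      _ = _ := by rw [e]; group
  have e4 : a⁻¹ ^ 3 = a ^ 4 := h.a_inv_pow 3 (by norm_num)
  calc x * torusElt x a * x = x * a⁻¹ ^ 3 * x * a ^ 2 * x * a⁻¹ ^ 3 * (x * x) := by
        rw [torusElt]; group
    _ = x⁻¹ * a ^ 4 * x⁻¹ * a ^ 2 * x⁻¹ * a ^ 4 := by rw [h.x_sq, h.x_inv, e4, mul_one]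
    _ = _ := by rw [e']; group

theorem x_torus_inv (h : BruhatRels x a) : x * (torusElt x a)⁻¹ = torusElt x a * x := by
  rw [← h.torus_conj_x]
  calc x * (x * torusElt x a * x) = (x * x) * torusElt x a * x := by group
    _ = _ := by rw [h.x_sq, one_mul]

theorem torus_inv_x (h : BruhatRels x a) : (torusElt x a)⁻¹ * x = x * torusElt x a := by
  rw [← h.torus_conj_x]
  simp only [mul_assoc, h.x_sq, mul_one]

theorem conj_neg_one (h : BruhatRels x a) : x * a ^ 6 * x = a * x * a := by
  have := congrArg (·⁻¹) h.braid
  simp only [mul_inv_rev, inv_inv, h.x_inv] at this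
  have e := h.a_inv_pow 1 (by norm_num)
  rw [pow_one] at e
  rw [← e, mul_assoc, this, mul_assoc]

/-- The quartic relation, solved for `x a⁻³ x = x a⁴ x`. -/
theorem conj_neg_three (h : BruhatRels x a) :
    x * a ^ 4 * x = a ^ 3 * (x * a ^ 3 * x) * a ^ 3 := by
  rw [show a ^ 4 = a⁻¹ ^ 3 from (h.a_inv_pow 3 (by norm_num)).symm]
  calc x * a⁻¹ ^ 3 * x = x * a⁻¹ ^ 3 * x⁻¹ * (x * a ^ 3) ^ 4 := by
        rw [h.quartic, h.x_inv, mul_one]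
    _ = (x * x) * a ^ 3 * (x * a ^ 3 * x) * a ^ 3 := by simp [pow_succ, mul_assoc]
    _ = _ := by rw [h.x_sq, one_mul]

/-- Comparing `x a⁴ x = (x a² x)²` with `conj_neg_three` and cancelling `a³` on both sides. -/
theorem conj_three_aux (h : BruhatRels x a) :
    x * a ^ 3 * x = torusElt x a * a * x * a * (torusElt x a)⁻¹ := by
  set b := torusElt x a with hb
  have e : a ^ 3 * (x * a ^ 3 * x) * a ^ 3 = a ^ 3 * (b * x * a ^ 6 * b * x) * a ^ 3 := by
    calc a ^ 3 * (x * a ^ 3 * x) * a ^ 3 = x * a ^ 2 * 1 * a ^ 2 * x := by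
          rw [← h.conj_neg_three]; group
      _ = (x * a ^ 2 * x) * (x * a ^ 2 * x) := by rw [← h.x_sq]; group
      _ = _ := by rw [h.conj_two]; simp only [hb]; group
  calc x * a ^ 3 * x = b * x * a ^ 6 * b * x := mul_left_cancel (mul_right_cancel e)
    _ = b * (x * a ^ 6 * x) * b⁻¹ := by
      simp only [mul_assoc]
      rw [hb, h.x_torus_inv]
    _ = _ := by rw [h.conj_neg_one]; group

/-- `torusElt x a` normalizes `⟨a⟩`, acting on it by squaring. Cancelling `x` in
`conj_three_aux` gives `b a³ b⁻¹ = a⁻¹`, whose fifth power is the claim. -/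
theorem torus_mul_a (h : BruhatRels x a) : torusElt x a * a = a ^ 2 * torusElt x a := by
  set b := torusElt x a with hb
  have e : x * a ^ 3 = x * (b⁻¹ * a⁻¹ * b) := by
    calc x * a ^ 3 = x * a ^ 3 * (x * x) := by rw [h.x_sq, mul_one]
      _ = (x * a ^ 3 * x) * x := by group
      _ = b * a * x * a * (b⁻¹ * x) := by rw [h.conj_three_aux]; simp only [hb]; group
      _ = b * a * (x * a * x) * b := by rw [h.torus_inv_x]; simp only [hb]; group
      _ = (b * x) * a⁻¹ * b := by rw [h.braid]; group
      _ = _ := by rw [hb, ← h.x_torus_inv]; group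
  have e2 : b * a ^ 3 * b⁻¹ = a⁻¹ := by rw [mul_left_cancel e]; group
  have e3 : b * a * b⁻¹ = a ^ 2 := by
    calc b * a * b⁻¹ = b * ((a ^ 7) ^ 2 * a) * b⁻¹ := by rw [h.a_pow]; group
      _ = (b * a ^ 3 * b⁻¹) ^ 5 := by rw [conj_pow]; group
      _ = a ^ 2 := by rw [e2, h.a_inv_pow 5 (by norm_num)]
  rw [← e3]; group

theorem torus_pow_mul_a_pow (h : BruhatRels x a) (j n : ℕ) :
    torusElt x a ^ j * a ^ n = a ^ (2 ^ j * n) * torusElt x a ^ j := by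
  have h1 : SemiconjBy (torusElt x a) a (a ^ 2) := h.torus_mul_a
  induction j with
  | zero => simp
  | succ j ih =>
    have h2 := (h1.pow_right (2 ^ j * n)).eq
    rw [pow_succ', mul_assoc, ih, ← mul_assoc, h2, ← pow_mul, mul_assoc]
    congr 2
    ring

theorem conj_three (h : BruhatRels x a) :
    x * a ^ 3 * x = a ^ 2 * torusElt x a ^ 2 * x * a ^ 2 := by
  set b := torusElt x a with hb
  have e : a * b⁻¹ = b⁻¹ * a ^ 2 := by
    have := h.torus_mul_a
    rw [← hb] at this
    calc a * b⁻¹ = b⁻¹ * (b * a) * b⁻¹ := by group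
      _ = _ := by rw [this]; group
  calc x * a ^ 3 * x = (b * a) * x * (a * b⁻¹) := by rw [h.conj_three_aux]; simp only [hb]; group
    _ = a ^ 2 * b * (x * b⁻¹) * a ^ 2 := by rw [e, hb, h.torus_mul_a]; group
    _ = _ := by rw [hb, h.x_torus_inv, pow_two (torusElt x a)]; simp only [mul_assoc]

theorem conj_four (h : BruhatRels x a) :
    x * a ^ 4 * x = a ^ 5 * torusElt x a ^ 2 * x * a ^ 5 := by
  rw [h.conj_neg_three, h.conj_three]; group

theorem conj_five (h : BruhatRels x a) :
    x * a ^ 5 * x = a ^ 4 * torusElt x a * x * a ^ 4 := by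
  have e := congrArg (·⁻¹) h.conj_two
  simp only [mul_inv_rev, h.x_inv, ← inv_pow, h.a_inv_pow 2 (by norm_num),
    h.a_inv_pow 3 (by norm_num)] at e
  simp only [Nat.reduceSub, ← mul_assoc] at e
  rw [e]
  simp only [mul_assoc]
  rw [← mul_assoc x, h.x_torus_inv, mul_assoc]

/-- Computing `x a⁵ x` as `(x a⁴ x)(x a x)` and comparing with `conj_five` gives `b ^ 4 = b`. -/
theorem torus_pow (h : BruhatRels x a) : torusElt x a ^ 3 = 1 := by
  set b := torusElt x a with hb
  have e : a ^ 4 * b ^ 4 * x * a ^ 4 = a ^ 4 * b * x * a ^ 4 := by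
    symm
    calc a ^ 4 * b * x * a ^ 4 = x * a ^ 4 * 1 * a * x := by rw [hb, ← h.conj_five]; group
      _ = (x * a ^ 4 * x) * (x * a * x) := by rw [← h.x_sq]; group
      _ = a ^ 5 * b ^ 2 * (x * a ^ 4 * x) * a⁻¹ := by
        nth_rewrite 1 [h.conj_four]
        rw [h.braid]; simp only [hb]; group
      _ = a ^ 5 * (b ^ 2 * a ^ 5) * b ^ 2 * x * a ^ 4 := by rw [h.conj_four]; simp only [hb]; group
      _ = a ^ 4 * (a ^ 7) ^ 3 * b ^ 4 * x * a ^ 4 := by rw [hb, h.torus_pow_mul_a_pow]; group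
      _ = _ := by rw [h.a_pow]; group
  have e2 := mul_left_cancel (a := a ^ 4) (b := b ^ 4) (c := b)
    (mul_right_cancel (mul_right_cancel e))
  calc b ^ 3 = b ^ 4 * b⁻¹ := by group
    _ = 1 := by rw [e2]; group

/-- The Bruhat rewriting rule `x U* x ⊆ B x U`, where `U = ⟨a⟩` and `B = ⟨a, b⟩`. -/
theorem conj_pow_exists (h : BruhatRels x a) (k : ℕ) (hk : k % 7 ≠ 0) :
    ∃ p q r : ℕ, x * a ^ k * x = a ^ p * torusElt x a ^ q * x * a ^ r := by
  rw [pow_eq_pow_mod k h.a_pow]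
  have hlt : k % 7 < 7 := Nat.mod_lt _ (by norm_num)
  generalize k % 7 = m at hk hlt
  have e6 := h.a_inv_pow 1 (by norm_num)
  interval_cases m
  · exact absurd rfl hk
  · refine ⟨6, 0, 6, ?_⟩
    rw [pow_one, h.braid, ← pow_one a⁻¹, e6]; simp
  · exact ⟨3, 1, 3, by rw [h.conj_two, pow_one]⟩
  · exact ⟨2, 2, 2, h.conj_three⟩
  · exact ⟨5, 2, 5, h.conj_four⟩
  · exact ⟨4, 1, 4, by rw [h.conj_five, pow_one]⟩
  · exact ⟨1, 0, 1, by rw [h.conj_neg_one]; simp⟩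

end BruhatRels

/-! ### Normal forms -/

/-- The Bruhat normal forms: `a ^ i * b ^ j` for the small cell `B`, indexed by `none`, and
`a ^ i * b ^ j * x * a ^ k` for the big cell `B x U`, indexed by `some k`. -/
def bruhatForm {G : Type*} [Group G] (x a : G) : Fin 7 × Fin 3 × Option (Fin 7) → G
  | (i, j, none) => a ^ (i : ℕ) * torusElt x a ^ (j : ℕ)
  | (i, j, some k) => a ^ (i : ℕ) * torusElt x a ^ (j : ℕ) * x * a ^ (k : ℕ)

namespace BruhatRels

variable {G : Type*} [Group G] {x a : G}

theorem mem_range_small (h : BruhatRels x a) (i j : ℕ) :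
    a ^ i * torusElt x a ^ j ∈ Set.range (bruhatForm x a) :=
  ⟨(⟨i % 7, Nat.mod_lt _ (by norm_num)⟩, ⟨j % 3, Nat.mod_lt _ (by norm_num)⟩, none), by
    simp only [bruhatForm]
    rw [← pow_eq_pow_mod i h.a_pow, ← pow_eq_pow_mod j h.torus_pow]⟩

theorem mem_range_big (h : BruhatRels x a) (i j k : ℕ) :
    a ^ i * torusElt x a ^ j * x * a ^ k ∈ Set.range (bruhatForm x a) :=
  ⟨(⟨i % 7, Nat.mod_lt _ (by norm_num)⟩, ⟨j % 3, Nat.mod_lt _ (by norm_num)⟩,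
    some ⟨k % 7, Nat.mod_lt _ (by norm_num)⟩), by
    simp only [bruhatForm]
    rw [← pow_eq_pow_mod i h.a_pow, ← pow_eq_pow_mod j h.torus_pow,
      ← pow_eq_pow_mod k h.a_pow]⟩

theorem range_mul_a (h : BruhatRels x a) {g : G} (hg : g ∈ Set.range (bruhatForm x a)) :
    g * a ∈ Set.range (bruhatForm x a) := by
  obtain ⟨⟨i, j, _ | k⟩, rfl⟩ := hg
  · have e := h.torus_pow_mul_a_pow j 1
    rw [pow_one] at e
    simp only [bruhatForm]
    rw [mul_assoc, e, ← mul_assoc, ← pow_add]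
    exact h.mem_range_small _ _
  · simp only [bruhatForm]
    rw [mul_assoc, ← pow_succ]
    exact h.mem_range_big _ _ _

theorem range_mul_x (h : BruhatRels x a) {g : G} (hg : g ∈ Set.range (bruhatForm x a)) :
    g * x ∈ Set.range (bruhatForm x a) := by
  obtain ⟨⟨i, j, _ | k⟩, rfl⟩ := hg
  · simpa [bruhatForm] using h.mem_range_big i j 0
  · simp only [bruhatForm]
    have e0 : a ^ (i : ℕ) * torusElt x a ^ (j : ℕ) * x * a ^ (k : ℕ) * x =
        a ^ (i : ℕ) * torusElt x a ^ (j : ℕ) * (x * a ^ (k : ℕ) * x) := by group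
    rw [e0]
    by_cases hk : (k : ℕ) % 7 = 0
    · rw [pow_eq_pow_mod k h.a_pow, hk, pow_zero, mul_one, h.x_sq, mul_one]
      exact h.mem_range_small _ _
    · obtain ⟨p, q, r, e⟩ := h.conj_pow_exists k hk
      have e1 : a ^ (i : ℕ) * torusElt x a ^ (j : ℕ) * (x * a ^ (k : ℕ) * x) =
          a ^ (i + 2 ^ (j : ℕ) * p) * torusElt x a ^ (j + q : ℕ) * x * a ^ r := by
        calc _ = a ^ (i : ℕ) * (torusElt x a ^ (j : ℕ) * a ^ p) * torusElt x a ^ q * x *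
              a ^ r := by rw [e]; simp only [mul_assoc]
          _ = _ := by
            rw [h.torus_pow_mul_a_pow, pow_add, pow_add]; simp only [mul_assoc]
      rw [e1]
      exact h.mem_range_big _ _ _

theorem bruhatForm_surjective (h : BruhatRels x a) (hgen : Subgroup.closure {x, a} = ⊤) :
    Function.Surjective (bruhatForm x a) := by
  intro g
  have hg : g ∈ Subgroup.closure {x, a} := hgen ▸ Subgroup.mem_top g
  induction hg using Subgroup.closure_induction_right with
  | one => simpa using h.mem_range_small 0 0
  | mul_right u hu s hs ih =>
    rcases hs with rfl | rfl
    · exact h.range_mul_x ih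
    · exact h.range_mul_a ih
  | mul_inv_cancel u hu s hs ih =>
    rcases hs with rfl | rfl
    · rw [h.x_inv]
      exact h.range_mul_x ih
    · have e := h.a_inv_pow 1 (by norm_num)
      rw [pow_one] at e
      rw [e]
      have aux : ∀ n : ℕ, u * s ^ n ∈ Set.range (bruhatForm x s) := by
        intro n
        induction n with
        | zero => simpa using ih
        | succ n ihn => rw [pow_succ, ← mul_assoc]; exact h.range_mul_a ihn
      exact aux _

/-- If `x` normalized `⟨a⟩`, then `x a x = a⁻¹ x a⁻¹` would put `x` itself into `⟨a⟩`. -/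
theorem x_notMem_normalizer (h : BruhatRels x a) (hne : x * a ≠ a * x) :
    x ∉ Subgroup.normalizer (Subgroup.zpowers a : Set G) := by
  intro hx
  rw [Subgroup.mem_normalizer_iff] at hx
  have h1 := (hx a).1 (Subgroup.mem_zpowers a)
  rw [h.x_inv, h.braid] at h1
  have ha := Subgroup.mem_zpowers a
  have h2 := mul_mem (mul_mem ha h1) ha
  have e : a * (a⁻¹ * x * a⁻¹) * a = x := by group
  rw [e] at h2
  obtain ⟨n, rfl⟩ := Subgroup.mem_zpowers_iff.1 h2
  exact hne ((Commute.refl a).zpow_left n).eq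

theorem a_mem_normalizer : a ∈ Subgroup.normalizer (Subgroup.zpowers a : Set G) :=
  Subgroup.le_normalizer (Subgroup.mem_zpowers a)

theorem torus_mem_normalizer (h : BruhatRels x a) :
    torusElt x a ∈ Subgroup.normalizer (Subgroup.zpowers a : Set G) := by
  set b := torusElt x a with hb
  have hconj : ∀ n : ℤ, b * a ^ n * b⁻¹ ∈ Subgroup.zpowers a := by
    intro n
    rw [← conj_zpow, hb, h.torus_mul_a, mul_inv_cancel_right]
    exact zpow_mem (pow_mem (Subgroup.mem_zpowers a) 2) n
  rw [Subgroup.mem_normalizer_iff]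
  intro g
  constructor
  · rintro ⟨n, rfl⟩
    exact hconj n
  · rintro ⟨n, hn⟩
    -- As `b ^ 3 = 1`, conjugation by `b⁻¹` is conjugation by `b` applied twice.
    have hn' : a ^ n = b * g * b⁻¹ := hn
    obtain ⟨m, hm⟩ := hconj n
    have hm' : a ^ m = b * a ^ n * b⁻¹ := hm
    have h3 := hconj m
    rw [hm', hn'] at h3
    have e : b * (b * (b * g * b⁻¹) * b⁻¹) * b⁻¹ = b ^ 3 * g * (b ^ 3)⁻¹ := by
      simp [pow_succ, mul_assoc]
    rw [e, hb, h.torus_pow] at h3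
    simpa using h3

theorem a_pow_inj (h : BruhatRels x a) (ha1 : a ≠ 1) {i j : Fin 7}
    (e : a ^ (i : ℕ) = a ^ (j : ℕ)) : i = j := by
  have : Fact (Nat.Prime 7) := ⟨by norm_num⟩
  have ho : orderOf a = 7 := orderOf_eq_prime h.a_pow ha1
  have := pow_injOn_Iio_orderOf (x := a) (by simp [ho]) (by simp [ho]) e
  exact Fin.ext this

/-- The small cell has `21` distinct elements: `b ^ j` acts on `⟨a⟩` by raising to the power
`2 ^ j`, so it determines `j`. -/
theorem small_inj (h : BruhatRels x a) (ha1 : a ≠ 1) {i i' : Fin 7} {j j' : Fin 3}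
    (e : a ^ (i : ℕ) * torusElt x a ^ (j : ℕ) = a ^ (i' : ℕ) * torusElt x a ^ (j' : ℕ)) :
    i = i' ∧ j = j' := by
  have act : ∀ (i : Fin 7) (j : Fin 3), (a ^ (i : ℕ) * torusElt x a ^ (j : ℕ)) * a =
      a ^ (2 ^ (j : ℕ)) * (a ^ (i : ℕ) * torusElt x a ^ (j : ℕ)) := by
    intro i j
    have e1 := h.torus_pow_mul_a_pow j 1
    rw [pow_one, mul_one] at e1
    rw [mul_assoc, e1, ← mul_assoc, ← mul_assoc, ← pow_add, ← pow_add, add_comm]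
  have e2 := act i j
  rw [e, act i' j'] at e2
  have e3 := mul_right_cancel e2
  have hj : j = j' := by
    have key := a_pow_inj h ha1 (i := ⟨2 ^ (j' : ℕ), by fin_cases j' <;> simp⟩)
      (j := ⟨2 ^ (j : ℕ), by fin_cases j <;> simp⟩) e3
    rw [Fin.mk.injEq] at key
    exact Fin.ext (Nat.pow_right_injective le_rfl key).symm
  subst hj
  exact ⟨h.a_pow_inj ha1 (mul_right_cancel e), rfl⟩

theorem bruhatForm_injective (h : BruhatRels x a) (hne : x * a ≠ a * x) :
    Function.Injective (bruhatForm x a) := by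
  have ha1 : a ≠ 1 := by rintro rfl; simp at hne
  have hxB := h.x_notMem_normalizer hne
  set B := Subgroup.normalizer (Subgroup.zpowers a : Set G) with hB
  have haB : a ∈ B := a_mem_normalizer
  have hbB : torusElt x a ∈ B := h.torus_mem_normalizer
  have hsm : ∀ i j : ℕ, a ^ i * torusElt x a ^ j ∈ B := fun i j =>
    mul_mem (pow_mem haB _) (pow_mem hbB _)
  have hbig : ∀ i j k : ℕ, a ^ i * torusElt x a ^ j * x * a ^ k ∉ B := by
    intro i j k hm
    rw [Subgroup.mul_mem_cancel_right _ (pow_mem haB _),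
      Subgroup.mul_mem_cancel_left _ (hsm i j)] at hm
    exact hxB hm
  rintro ⟨i, j, _ | k⟩ ⟨i', j', _ | k'⟩ e
  · obtain ⟨rfl, rfl⟩ := h.small_inj ha1 e
    rfl
  · exact absurd (show bruhatForm x a (i', j', some k') ∈ B from e ▸ hsm i j) (hbig i' j' k')
  · exact absurd (show bruhatForm x a (i, j, some k) ∈ B from e.symm ▸ hsm i' j') (hbig i j k)
  · simp only [bruhatForm] at e
    have hk : k = k' := by
      by_contra hk
      -- The exponent `k + (7 - k')` represents `k - k'` modulo `7`.
      have hmod : ((k : ℕ) + (7 - k')) % 7 ≠ 0 := by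
        intro h0; apply hk; apply Fin.ext; omega
      obtain ⟨p, q, r, e1⟩ := h.conj_pow_exists _ hmod
      apply hbig p q r
      rw [← e1, pow_add, ← h.a_inv_pow k' (by omega)]
      have e2 : x * (a ^ (k : ℕ) * a⁻¹ ^ (k' : ℕ)) * x =
          (a ^ (i : ℕ) * torusElt x a ^ (j : ℕ))⁻¹ *
            (a ^ (i' : ℕ) * torusElt x a ^ (j' : ℕ)) := by
        calc _ = (a ^ (i : ℕ) * torusElt x a ^ (j : ℕ))⁻¹ *
              (a ^ (i : ℕ) * torusElt x a ^ (j : ℕ) * x * a ^ (k : ℕ)) *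
              a⁻¹ ^ (k' : ℕ) * x := by group
          _ = (a ^ (i : ℕ) * torusElt x a ^ (j : ℕ))⁻¹ *
            (a ^ (i' : ℕ) * torusElt x a ^ (j' : ℕ)) * (x * x) := by rw [e]; group
          _ = _ := by rw [h.x_sq, mul_one]
      rw [e2]
      exact mul_mem (inv_mem (hsm _ _)) (hsm _ _)
    subst hk
    obtain ⟨rfl, rfl⟩ := h.small_inj ha1 (mul_right_cancel (mul_right_cancel e))
    rfl

end BruhatRels

/-! ### The matrices -/

theorem map_bruhatForm {G H : Type*} [Group G] [Group H] (φ : G →* H) (x a : G)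
    (t : Fin 7 × Fin 3 × Option (Fin 7)) :
    φ (bruhatForm x a t) = bruhatForm (φ x) (φ a) t := by
  obtain ⟨i, j, _ | k⟩ := t <;> simp [bruhatForm, torusElt]

/-- The matrix `α` as a unit; it is an involution. -/
def alphaUnit : (Matrix (Fin 3) (Fin 3) (ZMod 2))ˣ where
  val := !![1, 1, 0; 0, 1, 0; 0, 0, 1]
  inv := !![1, 1, 0; 0, 1, 0; 0, 0, 1]
  val_inv := by decide
  inv_val := by decide

/-- The matrix `β` as a unit; its inverse is its transpose. -/
def betaUnit : (Matrix (Fin 3) (Fin 3) (ZMod 2))ˣ where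
  val := !![0, 0, 1; 1, 0, 0; 0, 1, 0]
  inv := !![0, 1, 0; 0, 0, 1; 1, 0, 0]
  val_inv := by decide
  inv_val := by decide

theorem alpha_sq : alphaUnit ^ 2 = 1 := by decide
theorem beta_cube : betaUnit ^ 3 = 1 := by decide

theorem alpha_beta_val : (alphaUnit * betaUnit).val = !![1, 0, 1; 1, 0, 0; 0, 1, 0] := by decide

theorem alpha_beta_comm_val :
    (alphaUnit * betaUnit * alphaUnit * betaUnit⁻¹).val = !![1, 1, 1; 0, 1, 1; 0, 0, 1] := by
  have e : (alphaUnit * betaUnit⁻¹).val = !![0, 1, 1; 0, 0, 1; 1, 0, 0] := by decide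
  rw [mul_assoc, Units.val_mul, alpha_beta_val, e]
  decide

-- The powers are computed through intermediate literal matrices to keep each evaluation small.
theorem alpha_beta_pow : (alphaUnit * betaUnit) ^ 7 = 1 := by
  apply Units.ext
  have e2 : (!![1, 0, 1; 1, 0, 0; 0, 1, 0] : Matrix (Fin 3) (Fin 3) (ZMod 2)) * !![1, 0, 1; 1, 0, 0; 0, 1, 0] =
      !![1, 1, 1; 1, 0, 1; 1, 0, 0] := by decide
  have e3 : (!![1, 1, 1; 1, 0, 1; 1, 0, 0] : Matrix (Fin 3) (Fin 3) (ZMod 2)) * !![1, 0, 1; 1, 0, 0; 0, 1, 0] =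
      !![0, 1, 1; 1, 1, 1; 1, 0, 1] := by decide
  have e6 : (!![0, 1, 1; 1, 1, 1; 1, 0, 1] : Matrix (Fin 3) (Fin 3) (ZMod 2)) * !![0, 1, 1; 1, 1, 1; 1, 0, 1] =
      !![0, 1, 0; 0, 0, 1; 1, 1, 0] := by decide
  have e7 : (!![0, 1, 0; 0, 0, 1; 1, 1, 0] : Matrix (Fin 3) (Fin 3) (ZMod 2)) * !![1, 0, 1; 1, 0, 0; 0, 1, 0] =
      1 := by decide
  rw [Units.val_pow_eq_pow_val, alpha_beta_val, pow_succ _ 6, pow_mul _ 3 2, pow_two (_ ^ 3),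
    pow_succ _ 2, pow_two, e2, e3, e6, e7, Units.val_one]

theorem alpha_beta_comm_pow :
    (alphaUnit * betaUnit * alphaUnit * betaUnit⁻¹) ^ 4 = 1 := by
  apply Units.ext
  have e2 : (!![1, 1, 1; 0, 1, 1; 0, 0, 1] : Matrix (Fin 3) (Fin 3) (ZMod 2)) * !![1, 1, 1; 0, 1, 1; 0, 0, 1] =
      !![1, 0, 1; 0, 1, 0; 0, 0, 1] := by decide
  have e4 : (!![1, 0, 1; 0, 1, 0; 0, 0, 1] : Matrix (Fin 3) (Fin 3) (ZMod 2)) * !![1, 0, 1; 0, 1, 0; 0, 0, 1] =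
      1 := by decide
  rw [Units.val_pow_eq_pow_val, alpha_beta_comm_val, pow_mul _ 2 2, pow_two (_ ^ 2), pow_two, e2,
    e4, Units.val_one]

theorem alpha_noncomm :
    alphaUnit * (alphaUnit * betaUnit) ≠ (alphaUnit * betaUnit) * alphaUnit := by
  intro h
  have h2 := congrArg Units.val h
  rw [Units.val_mul, Units.val_mul _ alphaUnit, alpha_beta_val] at h2
  revert h2
  decide

theorem card_units_matrix : Nat.card (Matrix (Fin 3) (Fin 3) (ZMod 2))ˣ = 168 := by
  have := Matrix.card_GL_field (𝔽 := ZMod 2) 3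
  rw [show Nat.card (Matrix (Fin 3) (Fin 3) (ZMod 2))ˣ = Nat.card (GL (Fin 3) (ZMod 2)) from rfl,
    this]
  simp [Fin.prod_univ_three]

/-- `GL₃(ℤ/2)` has the presentation `⟨α, β ∣ α² = β³ = (αβ)⁷ = (αβαβ⁻¹)⁴ = 1⟩`:
the quotient of the free group on two generators by the normal closure of the relators is
isomorphic to `GL₃(ℤ/2)` via an isomorphism sending the generators to the matrices
`α = [[1,1,0],[0,1,0],[0,0,1]]` and `β = [[0,0,1],[1,0,0],[0,1,0]]`. -/
theorem presentation_GL3_Z2 :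
    ∃ e : PresentedGroup gl3Rels ≃* (Matrix (Fin 3) (Fin 3) (ZMod 2))ˣ,
      ((e (PresentedGroup.of 0) : (Matrix (Fin 3) (Fin 3) (ZMod 2))ˣ) :
          Matrix (Fin 3) (Fin 3) (ZMod 2)) = !![1, 1, 0; 0, 1, 0; 0, 0, 1] ∧
      ((e (PresentedGroup.of 1) : (Matrix (Fin 3) (Fin 3) (ZMod 2))ˣ) :
          Matrix (Fin 3) (Fin 3) (ZMod 2)) = !![0, 0, 1; 1, 0, 0; 0, 1, 0] := by
  have hrel : ∀ r : FreeGroup (Fin 2), r ∈ gl3Rels →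
      FreeGroup.lift ![alphaUnit, betaUnit] r = 1 := by
    intro r hr
    simp only [gl3Rels, Set.mem_insert_iff, Set.mem_singleton_iff] at hr
    rcases hr with rfl | rfl | rfl | rfl
    · simpa using alpha_sq
    · simpa using beta_cube
    · simpa using alpha_beta_pow
    · simpa using alpha_beta_comm_pow
  let φ : PresentedGroup gl3Rels →* (Matrix (Fin 3) (Fin 3) (ZMod 2))ˣ :=
    PresentedGroup.toGroup hrel
  set x : PresentedGroup gl3Rels := PresentedGroup.of 0 with hx
  set y : PresentedGroup gl3Rels := PresentedGroup.of 1 with hy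
  have hφx : φ x = alphaUnit := PresentedGroup.toGroup.of hrel
  have hφy : φ y = betaUnit := PresentedGroup.toGroup.of hrel
  have hone : ∀ r ∈ gl3Rels, PresentedGroup.mk gl3Rels r = 1 := fun r hr =>
    PresentedGroup.one_of_mem hr
  have hP : BruhatRels x (x * y) := by
    apply bruhatRels_of_rels
    · exact hone _ (Or.inl rfl)
    · exact hone _ (Or.inr (Or.inl rfl))
    · exact hone _ (Or.inr (Or.inr (Or.inl rfl)))
    · exact hone _ (Or.inr (Or.inr (Or.inr rfl)))
  have hQ : BruhatRels alphaUnit (alphaUnit * betaUnit) :=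
    bruhatRels_of_rels alpha_sq beta_cube alpha_beta_pow alpha_beta_comm_pow
  have hgen : Subgroup.closure {x, x * y} = ⊤ := by
    rw [eq_top_iff, ← PresentedGroup.closure_range_of gl3Rels, Subgroup.closure_le]
    have hxm : x ∈ Subgroup.closure {x, x * y} := Subgroup.subset_closure (Or.inl rfl)
    have hxym : x * y ∈ Subgroup.closure {x, x * y} := Subgroup.subset_closure (Or.inr rfl)
    rintro _ ⟨i, rfl⟩
    fin_cases i
    · exact hxm
    · exact (Subgroup.mul_mem_cancel_left _ hxm).1 hxym
  have hsurj := hP.bruhatForm_surjective hgen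
  have hbij : Function.Bijective (bruhatForm alphaUnit (alphaUnit * betaUnit)) := by
    rw [Nat.bijective_iff_injective_and_card]
    exact ⟨hQ.bruhatForm_injective alpha_noncomm, by rw [card_units_matrix]; simp⟩
  have hcomp : ∀ t, φ (bruhatForm x (x * y) t) =
      bruhatForm alphaUnit (alphaUnit * betaUnit) t := by
    intro t
    rw [map_bruhatForm, map_mul, hφx, hφy]
  have hφ : Function.Bijective φ := by
    constructor
    · intro g g' hgg
      obtain ⟨t, rfl⟩ := hsurj g
      obtain ⟨t', rfl⟩ := hsurj g'
      rw [hcomp, hcomp] at hgg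
      rw [hbij.1 hgg]
    · intro g
      obtain ⟨t, rfl⟩ := hbij.2 g
      exact ⟨_, hcomp t⟩
  refine ⟨MulEquiv.ofBijective φ hφ, ?_, ?_⟩
  · change (φ x).val = _
    rw [hφx]; rfl
  · change (φ y).val = _
    rw [hφy]; rfl
end

section
/- Let k ≥ 1 and let a ∈ Z_{2^k} satisfy a² + a + 2 = 0. Define the 3 × 3 matrices over Z_{2^k}: ᾱ with rows (1, a, −a−1), (0, −1, 0), (0, 0, −1), and β̄ with rows (0,0,1), (1,0,0), (0,1,0). Then ᾱ and β̄ are invertible and satisfy ᾱ² = 1, β̄³ = 1, (ᾱβ̄)⁷ = 1 and (ᾱβ̄ᾱβ̄⁻¹)⁴ = 1. -/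
/-!
The product `ᾱβ̄` is, up to signs, a companion matrix with characteristic polynomial
`x³ - a x² - (a + 1) x - 1`, which divides `x⁷ - 1` once `a² + a + 2 = 0`: this is the
factorization of the seventh cyclotomic polynomial over `ℤ[(-1 + √-7) / 2]`. The product
`ᾱβ̄ᾱβ̄⁻¹` is block upper triangular: its leading `2 × 2` block has square `-1` and its last
diagonal entry is `1`; its square thus has blocks `-1` and `1`, and hence is an involution.
Both facts use only `a² + a + 2 = 0`, so they hold over any commutative ring. They are checked
by multiplying out, reducing the powers of `a` after every multiplication; `β̄` is a permutation
matrix, so `β̄⁻¹` is its transpose.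
-/

theorem alpha_sq_s12 {R : Type*} [CommRing R] (a : R) :
    (!![1, a, -a - 1; 0, -1, 0; 0, 0, -1] : Matrix (Fin 3) (Fin 3) R) ^ 2 = 1 := by
  rw [pow_two, Matrix.one_fin_three]
  ext i j
  fin_cases i <;> fin_cases j <;> simp [Matrix.mul_apply, Fin.sum_univ_three] <;> ring

theorem beta_mul_transpose {R : Type*} [CommRing R] :
    (!![0, 0, 1; 1, 0, 0; 0, 1, 0] : Matrix (Fin 3) (Fin 3) R) *
      !![0, 1, 0; 0, 0, 1; 1, 0, 0] = 1 := by
  rw [Matrix.one_fin_three]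
  ext i j
  fin_cases i <;> fin_cases j <;> simp [Matrix.mul_apply, Fin.sum_univ_three]

theorem beta_cube_s12 {R : Type*} [CommRing R] :
    (!![0, 0, 1; 1, 0, 0; 0, 1, 0] : Matrix (Fin 3) (Fin 3) R) ^ 3 = 1 := by
  rw [pow_succ, pow_two, Matrix.one_fin_three]
  ext i j
  fin_cases i <;> fin_cases j <;> simp [Matrix.mul_apply, Fin.sum_univ_three]

theorem alpha_mul_beta {R : Type*} [CommRing R] (a : R) :
    (!![1, a, -a - 1; 0, -1, 0; 0, 0, -1] : Matrix (Fin 3) (Fin 3) R) *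
      !![0, 0, 1; 1, 0, 0; 0, 1, 0] = !![a, -a - 1, 1; -1, 0, 0; 0, -1, 0] := by
  ext i j
  fin_cases i <;> fin_cases j <;> simp [Matrix.mul_apply, Fin.sum_univ_three]

/-- The relation `(ᾱβ̄)⁷ = 1`, for the product `ᾱβ̄` computed in `alpha_mul_beta`. -/
theorem companion_pow_seven {R : Type*} [CommRing R] {a : R} (ha : a ^ 2 + a + 2 = 0) :
    (!![a, -a - 1, 1; -1, 0, 0; 0, -1, 0] : Matrix (Fin 3) (Fin 3) R) ^ 7 = 1 := by
  have h3 : (!![a, -a - 1, 1; -1, 0, 0; 0, -1, 0] : Matrix (Fin 3) (Fin 3) R) ^ 3 =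
      !![-a - 1, 1, -1; 1, -1, -a; a, -a - 1, 1] := by
    rw [pow_succ, pow_two]
    ext i j
    fin_cases i <;> fin_cases j <;> simp [Matrix.mul_apply, Fin.sum_univ_three] <;> grind
  -- The sixth power is the inverse of the companion matrix.
  have h6 : (!![a, -a - 1, 1; -1, 0, 0; 0, -1, 0] : Matrix (Fin 3) (Fin 3) R) ^ 6 =
      !![0, -1, 0; 0, 0, -1; 1, a, -a - 1] := by
    rw [pow_mul _ 3 2, h3, pow_two]
    ext i j
    fin_cases i <;> fin_cases j <;> simp [Matrix.mul_apply, Fin.sum_univ_three] <;> grind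
  rw [pow_succ, h6, Matrix.one_fin_three]
  ext i j
  fin_cases i <;> fin_cases j <;> simp [Matrix.mul_apply, Fin.sum_univ_three] <;> ring

/-- `ᾱβ̄ᾱβ̄⁻¹`, with `β̄⁻¹` written as the transpose of `β̄`. -/
theorem alpha_beta_alpha_beta_transpose {R : Type*} [CommRing R] {a : R}
    (ha : a ^ 2 + a + 2 = 0) :
    (!![a, -a - 1, 1; -1, 0, 0; 0, -1, 0] : Matrix (Fin 3) (Fin 3) R) *
      !![1, a, -a - 1; 0, -1, 0; 0, 0, -1] * !![0, 1, 0; 0, 0, 1; 1, 0, 0] =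
      !![1, a, -1; a + 1, -1, -a; 0, 0, 1] := by
  ext i j
  fin_cases i <;> fin_cases j <;> simp [Matrix.mul_apply, Fin.sum_univ_three] <;> grind

/-- The relation `(ᾱβ̄ᾱβ̄⁻¹)⁴ = 1`, for the product computed in
`alpha_beta_alpha_beta_transpose`. -/
theorem block_pow_four {R : Type*} [CommRing R] {a : R} (ha : a ^ 2 + a + 2 = 0) :
    (!![1, a, -1; a + 1, -1, -a; 0, 0, 1] : Matrix (Fin 3) (Fin 3) R) ^ 4 = 1 := by
  have h2 : (!![1, a, -1; a + 1, -1, -a; 0, 0, 1] : Matrix (Fin 3) (Fin 3) R) ^ 2 =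
      !![-1, 0, a; 0, -1, -a - 1; 0, 0, 1] := by
    rw [pow_two]
    ext i j
    fin_cases i <;> fin_cases j <;> simp [Matrix.mul_apply, Fin.sum_univ_three] <;> grind
  rw [pow_mul _ 2 2, h2, pow_two, Matrix.one_fin_three]
  ext i j
  fin_cases i <;> fin_cases j <;> simp [Matrix.mul_apply, Fin.sum_univ_three] <;> ring

/-- If `a ∈ ℤ/2^k` satisfies `a² + a + 2 = 0`, then the matrices
`ᾱ = [[1, a, -a-1], [0, -1, 0], [0, 0, -1]]` and `β̄ = [[0,0,1],[1,0,0],[0,1,0]]` over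
`ℤ/2^k` are invertible and satisfy `ᾱ² = 1`, `β̄³ = 1`, `(ᾱβ̄)⁷ = 1` and `(ᾱβ̄ᾱβ̄⁻¹)⁴ = 1`. -/
theorem relations_of_root (k : ℕ) (hk : 1 ≤ k) (a : ZMod (2 ^ k))
    (ha : a ^ 2 + a + 2 = 0) :
    IsUnit (!![1, a, -a - 1; 0, -1, 0; 0, 0, -1] : Matrix (Fin 3) (Fin 3) (ZMod (2 ^ k))) ∧
    IsUnit (!![0, 0, 1; 1, 0, 0; 0, 1, 0] : Matrix (Fin 3) (Fin 3) (ZMod (2 ^ k))) ∧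
    (!![1, a, -a - 1; 0, -1, 0; 0, 0, -1] : Matrix (Fin 3) (Fin 3) (ZMod (2 ^ k))) ^ 2 = 1 ∧
    (!![0, 0, 1; 1, 0, 0; 0, 1, 0] : Matrix (Fin 3) (Fin 3) (ZMod (2 ^ k))) ^ 3 = 1 ∧
    ((!![1, a, -a - 1; 0, -1, 0; 0, 0, -1] : Matrix (Fin 3) (Fin 3) (ZMod (2 ^ k))) *
        !![0, 0, 1; 1, 0, 0; 0, 1, 0]) ^ 7 = 1 ∧
    ((!![1, a, -a - 1; 0, -1, 0; 0, 0, -1] : Matrix (Fin 3) (Fin 3) (ZMod (2 ^ k))) *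
        !![0, 0, 1; 1, 0, 0; 0, 1, 0] *
        !![1, a, -a - 1; 0, -1, 0; 0, 0, -1] *
        (!![0, 0, 1; 1, 0, 0; 0, 1, 0] : Matrix (Fin 3) (Fin 3) (ZMod (2 ^ k)))⁻¹) ^ 4 = 1 := by
  refine ⟨IsUnit.of_pow_eq_one (alpha_sq_s12 a) two_ne_zero,
    IsUnit.of_pow_eq_one beta_cube_s12 three_ne_zero, alpha_sq_s12 a, beta_cube_s12, ?_, ?_⟩
  · rw [alpha_mul_beta, companion_pow_seven ha]
  · rw [Matrix.inv_eq_right_inv beta_mul_transpose, alpha_mul_beta,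
      alpha_beta_alpha_beta_transpose ha, block_pow_four ha]
end
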